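/- arXiv:1806.02456 — 2 statements merged into one kernel-verified Lean document; each statement's English description precedes it below -/
import Mathlib

section
/- Suppose f ∈ H¹(I,ℝⁿ) with derivative f', and for each ε > 0 let u_ε be the minimizer of E_ε over H¹(I,ℝⁿ), with derivative u_ε'. Let p ∈ (1,2], x₀ ∈ I and 0 < r < R with [x₀ − R, x₀ + R] ⊆ I. Then limsup_{ε → 0⁺} ∫_{x₀−r}^{x₀+r} |u_ε'|_ε^p ≤ ∫_{x₀−R}^{x₀+R} ‖f'‖^p. -/
open MeasureTheory Set Filter
open scoped ENNReal

noncomputable section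

/-- Square-integrability of `w` on the set `S`. -/
def SqIntOn {n : ℕ} (w : ℝ → EuclideanSpace ℝ (Fin n)) (S : Set ℝ) : Prop :=
  MeasureTheory.IntegrableOn (fun x => ‖w x‖ ^ 2) S

/-- `w` belongs to `H¹(I, ℝⁿ)` with (weak) derivative `w'`: it is continuous on `[a,b]`,
`w'` is square-integrable on `I = Ioo a b`, and the fundamental theorem of calculus holds. -/
def InH1 {n : ℕ} (a b : ℝ) (w w' : ℝ → EuclideanSpace ℝ (Fin n)) : Prop :=
  ContinuousOn w (Set.Icc a b) ∧
  MeasureTheory.IntegrableOn (fun x => ‖w' x‖ ^ 2) (Set.Ioo a b) ∧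
  ∀ x ∈ Set.Icc a b, ∀ y ∈ Set.Icc a b, w y - w x = ∫ t in x..y, w' t

/-- The regularized energy `E_ε` evaluated at `w ∈ H¹` with derivative `w'`. -/
def regEnergy {n : ℕ} (lam ε a b : ℝ) (f w w' : ℝ → EuclideanSpace ℝ (Fin n)) : ℝ :=
  ∫ x in Set.Ioo a b, ((1 / (2 * lam)) * ‖w x - f x‖ ^ 2
    + Real.sqrt (‖w' x‖ ^ 2 + ε ^ 2) + (ε ^ 2 / 2) * ‖w' x‖ ^ 2)

/-- `u` (with derivative `u'`) minimizes `E_ε` over `H¹(I, ℝⁿ)`. -/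
def IsMinimizerEps {n : ℕ} (lam ε a b : ℝ) (f u u' : ℝ → EuclideanSpace ℝ (Fin n)) : Prop :=
  InH1 a b u u' ∧ ∀ v v' : ℝ → EuclideanSpace ℝ (Fin n), InH1 a b v v' →
    regEnergy lam ε a b f u u' ≤ regEnergy lam ε a b f v v'

/-!
The Euler-Lagrange equation of `E_ε` says that the flux `Φ(u') = u' / |u'|_ε + ε² u'` is a primitive
of `(u - f) / λ` vanishing at both ends of the interval. As `Φ` is the gradient of a strongly convex
function it is a diffeomorphism, so `u'` agrees almost everywhere with a `C¹` function `q` such that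
`(Φ(q))' = (u - f) / λ`.

Test the derivative of this equation with `η |q|_ε ^ (p - 2) q` for a cutoff `η ≥ 0`. The part of
`⟪(Φ(q))', (η |q|_ε ^ (p - 2) q)'⟫` without `η'` has a sign, and the part with `η'` is
`ε²` times an exact derivative times `η'`, so a second integration by parts bounds it by
`ε² ∫ |q|_ε ^ p + ε ^ (p - 1)` up to a constant depending on `η''`. Young's inequality on the other
side gives `∫ η |u'|_ε ^ p ≤ ∫ η ‖f'‖ ^ p + o(1)`, once the global bound on `∫ |u'|_ε ^ p` obtained
from `η = 1` is inserted.
-/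

/-! ### The regularized norm and its flux -/

section RegNorm

variable {E : Type*} [NormedAddCommGroup E] {ε : ℝ}

/-- The regularized norm `|v|_ε = √(‖v‖² + ε²)`. -/
def regNorm (ε : ℝ) (v : E) : ℝ := √(‖v‖ ^ 2 + ε ^ 2)

theorem regNorm_nonneg (ε : ℝ) (v : E) : 0 ≤ regNorm ε v := Real.sqrt_nonneg _

theorem sq_regNorm (ε : ℝ) (v : E) : regNorm ε v ^ 2 = ‖v‖ ^ 2 + ε ^ 2 :=
  Real.sq_sqrt (by positivity)

theorem norm_sq_eq_sq_regNorm_sub (ε : ℝ) (v : E) : ‖v‖ ^ 2 = regNorm ε v ^ 2 - ε ^ 2 := by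
  rw [sq_regNorm, add_sub_cancel_right]

theorem le_regNorm (ε : ℝ) (v : E) : ε ≤ regNorm ε v :=
  Real.le_sqrt_of_sq_le (le_add_of_nonneg_left (sq_nonneg _))

theorem norm_le_regNorm (ε : ℝ) (v : E) : ‖v‖ ≤ regNorm ε v :=
  Real.le_sqrt_of_sq_le (le_add_of_nonneg_right (sq_nonneg _))

theorem regNorm_pos (hε : 0 < ε) (v : E) : 0 < regNorm ε v := hε.trans_le (le_regNorm ε v)

theorem continuous_regNorm (ε : ℝ) : Continuous (regNorm ε : E → ℝ) := by
  unfold regNorm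
  fun_prop

theorem continuous_regNorm_rpow (hε : 0 < ε) (c : ℝ) :
    Continuous fun v : E => regNorm ε v ^ c :=
  (continuous_regNorm ε).rpow_const fun v => .inl (regNorm_pos hε v).ne'

theorem regNorm_zero_le (ε : ℝ) (v : E) : regNorm ε (0 : E) ≤ regNorm ε v := by
  unfold regNorm
  gcongr
  simp

variable [InnerProductSpace ℝ E]

theorem regNorm_add_le (hε : 0 < ε) (q v : E) :
    regNorm ε (q + v) ≤ regNorm ε q + (regNorm ε q)⁻¹ * inner ℝ q v + (2 * ε)⁻¹ * ‖v‖ ^ 2 := by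
  have hs := regNorm_pos hε q
  have sq_add : regNorm ε (q + v) ^ 2 = regNorm ε q ^ 2 + 2 * inner ℝ q v + ‖v‖ ^ 2 := by
    rw [sq_regNorm, sq_regNorm, norm_add_sq_real]
    ring
  calc regNorm ε (q + v)
      ≤ (regNorm ε (q + v) ^ 2 + regNorm ε q ^ 2) / (2 * regNorm ε q) := by
        rw [le_div_iff₀ (by positivity)]
        linarith [two_mul_le_add_sq (regNorm ε (q + v)) (regNorm ε q)]
    _ = regNorm ε q + (regNorm ε q)⁻¹ * inner ℝ q v + (2 * regNorm ε q)⁻¹ * ‖v‖ ^ 2 := by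
        rw [sq_add]
        field_simp
        ring
    _ ≤ regNorm ε q + (regNorm ε q)⁻¹ * inner ℝ q v + (2 * ε)⁻¹ * ‖v‖ ^ 2 := by
        gcongr
        exact le_regNorm ε q

theorem contDiff_regNorm (hε : 0 < ε) {k : WithTop ℕ∞} : ContDiff ℝ k (regNorm ε : E → ℝ) :=
  ((contDiff_norm_sq ℝ).add contDiff_const).sqrt fun v => by positivity

theorem hasFDerivAt_regNorm (hε : 0 < ε) (q : E) :
    HasFDerivAt (regNorm ε) ((regNorm ε q)⁻¹ • innerSL ℝ q) q := by
  have h := ((hasStrictFDerivAt_norm_sq q).hasFDerivAt.add_const (ε ^ 2)).sqrt (by positivity)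
  refine h.congr_fderiv ?_
  rw [← regNorm, ← Nat.cast_smul_eq_nsmul ℝ, smul_smul]
  congr 1
  have := regNorm_pos hε q
  field_simp
  norm_num

/-- The flux `Φ(v) = v / |v|_ε + ε² v`, i.e. the gradient of the regularized integrand
`|v|_ε + ε² ‖v‖² / 2`. -/
def regFlux (ε : ℝ) (v : E) : E := ((regNorm ε v)⁻¹ + ε ^ 2) • v

@[simp]
theorem regFlux_zero (ε : ℝ) : regFlux ε (0 : E) = 0 := smul_zero _

theorem norm_regFlux_le (hε : 0 < ε) (v : E) : ‖regFlux ε v‖ ≤ (ε⁻¹ + ε ^ 2) * ‖v‖ := by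
  have := regNorm_pos hε v
  rw [regFlux, norm_smul, Real.norm_of_nonneg (by positivity)]
  gcongr
  exact le_regNorm ε v

theorem contDiff_regFlux (hε : 0 < ε) {k : WithTop ℕ∞} : ContDiff ℝ k (regFlux ε : E → E) :=
  (((contDiff_regNorm hε).inv fun v => (regNorm_pos hε v).ne').add contDiff_const).smul contDiff_id

/-- The derivative `DΦ(q)` of the flux at `q`, i.e. the Hessian of the regularized integrand. -/
def regFluxDeriv (ε : ℝ) (q : E) : E →L[ℝ] E :=
  ((regNorm ε q)⁻¹ + ε ^ 2) • ContinuousLinearMap.id ℝ E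
    - (regNorm ε q ^ 3)⁻¹ • (innerSL ℝ q).smulRight q

theorem regFluxDeriv_apply (ε : ℝ) (q v : E) : regFluxDeriv ε q v =
    ((regNorm ε q)⁻¹ + ε ^ 2) • v - ((regNorm ε q ^ 3)⁻¹ * inner ℝ q v) • q := by
  simp [regFluxDeriv, smul_smul]

theorem hasFDerivAt_regFlux (hε : 0 < ε) (q : E) :
    HasFDerivAt (regFlux ε) (regFluxDeriv ε q) q := by
  have hs := regNorm_pos hε q
  have h := (((hasDerivAt_inv hs.ne').comp_hasFDerivAt q (hasFDerivAt_regNorm hε q)).add_const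
    (ε ^ 2)).smul (hasFDerivAt_id q)
  refine h.congr_fderiv (ContinuousLinearMap.ext fun v => ?_)
  rw [regFluxDeriv_apply, sub_eq_add_neg, ← neg_smul]
  simp only [add_apply, smul_apply, ContinuousLinearMap.smulRight_apply, innerSL_apply_apply,
    smul_eq_mul, id, ContinuousLinearMap.id_apply, Function.comp_apply]
  congr 2
  field_simp

theorem inner_regFluxDeriv_left (hε : 0 < ε) (q v : E) :
    inner ℝ (regFluxDeriv ε q v) q = ε ^ 2 * (1 + (regNorm ε q ^ 3)⁻¹) * inner ℝ q v := by
  have hs := regNorm_pos hε q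
  rw [regFluxDeriv_apply, inner_sub_left, real_inner_smul_left, real_inner_smul_left,
    real_inner_comm, real_inner_self_eq_norm_sq, norm_sq_eq_sq_regNorm_sub ε q]
  field_simp
  ring

theorem inner_regFluxDeriv_self (ε : ℝ) (q v : E) : inner ℝ (regFluxDeriv ε q v) v =
    ((regNorm ε q)⁻¹ + ε ^ 2) * ‖v‖ ^ 2 - (regNorm ε q ^ 3)⁻¹ * inner ℝ q v ^ 2 := by
  rw [regFluxDeriv_apply, inner_sub_left, real_inner_smul_left, real_inner_smul_left,
    real_inner_self_eq_norm_sq]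
  ring

theorem real_inner_sq_le_sq_mul_sq (q v : E) : inner ℝ q v ^ 2 ≤ ‖q‖ ^ 2 * ‖v‖ ^ 2 := by
  simpa only [sq, real_inner_self_eq_norm_mul_norm] using real_inner_mul_inner_self_le q v

theorem le_inner_regFluxDeriv_self (hε : 0 < ε) (q v : E) :
    ε ^ 2 * ‖v‖ ^ 2 ≤ inner ℝ (regFluxDeriv ε q v) v := by
  have hs := regNorm_pos hε q
  have : (regNorm ε q ^ 3)⁻¹ * inner ℝ q v ^ 2 ≤ (regNorm ε q)⁻¹ * ‖v‖ ^ 2 := calc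
    _ ≤ (regNorm ε q ^ 3)⁻¹ * (regNorm ε q ^ 2 * ‖v‖ ^ 2) := by
      gcongr
      refine (real_inner_sq_le_sq_mul_sq q v).trans ?_
      gcongr
      exact norm_le_regNorm ε q
    _ = (regNorm ε q)⁻¹ * ‖v‖ ^ 2 := by field_simp
  rw [inner_regFluxDeriv_self]
  linarith

/-- The elementary inequality behind the gradient estimate: testing the differentiated
Euler-Lagrange equation with `|q|_ε ^ (p - 2) q` produces a term with a sign for every `p ≥ 1`. -/
theorem regFluxDeriv_weighted_nonneg {p : ℝ} (hp : 1 ≤ p) (hε : 0 < ε) (q v : E) :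
    0 ≤ inner ℝ (regFluxDeriv ε q v) v
      + (p - 2) * (regNorm ε q ^ 2)⁻¹ * inner ℝ q v * inner ℝ (regFluxDeriv ε q v) q := by
  have hs := regNorm_pos hε q
  have : 0 ≤ p - 1 := sub_nonneg.2 hp
  have cauchy_schwarz : 0 ≤ ‖q‖ ^ 2 * ‖v‖ ^ 2 - inner ℝ q v ^ 2 :=
    sub_nonneg.2 (real_inner_sq_le_sq_mul_sq q v)
  set s := regNorm ε q with hs_def
  have decomposition : inner ℝ (regFluxDeriv ε q v) v
      + (p - 2) * (s ^ 2)⁻¹ * inner ℝ q v * inner ℝ (regFluxDeriv ε q v) q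
      = (p - 1) * (s ^ 2)⁻¹ * (ε ^ 2 * (1 + (s ^ 3)⁻¹)) * inner ℝ q v ^ 2
        + (‖q‖ ^ 2 * ‖v‖ ^ 2 - inner ℝ q v ^ 2)
          * ((s ^ 3)⁻¹ + ε ^ 2 * (1 + (s ^ 3)⁻¹) * (s ^ 2)⁻¹)
        + ε ^ 2 * (1 + (s ^ 3)⁻¹) * ‖v‖ ^ 2 * ε ^ 2 * (s ^ 2)⁻¹ := by
    rw [inner_regFluxDeriv_self, inner_regFluxDeriv_left hε, norm_sq_eq_sq_regNorm_sub ε q,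
      ← hs_def]
    field_simp
    ring
  rw [decomposition]
  positivity

end RegNorm

/-! ### Inverses of strongly monotone maps -/

section InverseOfStronglyMonotone

theorem isClosed_range_of_antilipschitzWith {X Y : Type*} [PseudoEMetricSpace X] [CompleteSpace X]
    [EMetricSpace Y] {K : NNReal} {Φ : X → Y} (hΦ : AntilipschitzWith K Φ)
    (hcont : Continuous Φ) : IsClosed (range Φ) := by
  refine isClosed_of_closure_subset fun y hy => ?_
  obtain ⟨_, h_mem, h_lim⟩ := mem_closure_iff_seq_limit.1 hy
  choose v hv using h_mem
  obtain rfl := funext hv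
  have h_cauchy : CauchySeq v := by
    have h_image : Tendsto (Prod.map Φ Φ ∘ Prod.map v v) atTop (uniformity Y) :=
      cauchySeq_iff_tendsto.1 h_lim.cauchySeq
    exact cauchySeq_iff_tendsto.2 ((tendsto_comap_iff.2 h_image).mono_right hΦ.comap_uniformity_le)
  obtain ⟨x, hx⟩ := cauchySeq_tendsto_of_complete h_cauchy
  exact ⟨x, tendsto_nhds_unique ((hcont.tendsto x).comp hx) h_lim⟩

variable {E : Type*} [NormedAddCommGroup E] [InnerProductSpace ℝ E] {Φ : E → E} {c : ℝ}

theorem mul_norm_sub_sq_le_inner_of_fderiv (hΦ : Differentiable ℝ Φ)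
    (hc : ∀ x v, c * ‖v‖ ^ 2 ≤ inner ℝ (fderiv ℝ Φ x v) v) (x y : E) :
    c * ‖x - y‖ ^ 2 ≤ inner ℝ (Φ x - Φ y) (x - y) := by
  have along_segment (t : ℝ) : HasDerivAt (fun t : ℝ => inner ℝ (Φ (y + t • (x - y))) (x - y))
      (inner ℝ (fderiv ℝ Φ (y + t • (x - y)) (x - y)) (x - y)) t := by
    have h_line : HasDerivAt (fun t : ℝ => y + t • (x - y)) (x - y) t := by
      simpa using ((hasDerivAt_id t).smul_const (x - y)).const_add y
    have h := ((hΦ _).hasFDerivAt.comp_hasDerivAt t h_line).inner ℝ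
      (hasDerivAt_const t (x - y))
    simpa using h
  obtain ⟨t, -, ht⟩ := exists_hasDerivAt_eq_slope _ _ zero_lt_one
    (fun t _ => (along_segment t).continuousAt.continuousWithinAt) fun t _ => along_segment t
  have h := hc (y + t • (x - y)) (x - y)
  rw [ht] at h
  simpa [inner_sub_left] using h

theorem antilipschitzWith_of_mul_norm_sub_sq_le_inner (hc0 : 0 < c)
    (hΦ : ∀ x y, c * ‖x - y‖ ^ 2 ≤ inner ℝ (Φ x - Φ y) (x - y)) :
    AntilipschitzWith (Real.toNNReal c⁻¹) Φ := by
  refine AntilipschitzWith.of_le_mul_dist fun x y => ?_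
  rw [dist_eq_norm, dist_eq_norm, Real.coe_toNNReal _ (by positivity), inv_mul_eq_div,
    le_div_iff₀' hc0]
  rcases (norm_nonneg (x - y)).eq_or_lt with h | h
  · simp [← h]
  · refine le_of_mul_le_mul_right ?_ h
    calc c * ‖x - y‖ * ‖x - y‖ = c * ‖x - y‖ ^ 2 := by ring
      _ ≤ ‖Φ x - Φ y‖ * ‖x - y‖ := (hΦ x y).trans (real_inner_le_norm _ _)

theorem exists_contDiff_inverse_of_coercive_fderiv [CompleteSpace E] {k : WithTop ℕ∞} (hk : k ≠ 0)
    (hΦ : ContDiff ℝ k Φ) (hc0 : 0 < c) (hc : ∀ x v, c * ‖v‖ ^ 2 ≤ inner ℝ (fderiv ℝ Φ x v) v) :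
    ∃ Ψ : E → E, ContDiff ℝ k Ψ ∧ Function.LeftInverse Ψ Φ ∧ Function.RightInverse Ψ Φ := by
  have h_unit (x : E) : IsUnit (fderiv ℝ Φ x) := by
    refine (fderiv ℝ Φ x).isUnit_of_forall_le_norm_inner_map (Real.toNNReal_pos.2 hc0) fun v => ?_
    rw [Real.coe_toNNReal _ hc0.le, mul_comm]
    exact (hc x v).trans (le_abs_self _)
  let Φ' (x : E) : E ≃L[ℝ] E := ContinuousLinearEquiv.unitsEquiv ℝ E (h_unit x).unit
  have h_deriv (x : E) : HasStrictFDerivAt Φ (Φ' x : E →L[ℝ] E) x :=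
    hΦ.contDiffAt.hasStrictFDerivAt hk
  have h_anti := antilipschitzWith_of_mul_norm_sub_sq_le_inner hc0
    (mul_norm_sub_sq_le_inner_of_fderiv (hΦ.differentiable hk) hc)
  have h_open : IsOpenMap Φ := isOpenMap_of_hasStrictFDerivAt_equiv h_deriv
  have h_clopen : IsClopen (range Φ) :=
    ⟨isClosed_range_of_antilipschitzWith h_anti hΦ.continuous, h_open.isOpen_range⟩
  have h_surj : Function.Surjective Φ := range_eq_univ.1 (h_clopen.eq_univ (range_nonempty Φ))
  let e : E ≃ₜ E := (Equiv.ofBijective Φ ⟨h_anti.injective, h_surj⟩).toHomeomorphOfContinuousOpen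
    hΦ.continuous h_open
  exact ⟨e.symm, e.contDiff_symm (fun x => (h_deriv x).hasFDerivAt) hΦ, e.left_inv, e.right_inv⟩

end InverseOfStronglyMonotone

/-! ### Primitives of integrable functions -/

section AbsolutelyContinuous

variable {E : Type*} [NormedAddCommGroup E] {a b : ℝ}

theorem absolutelyContinuousOnInterval_of_dist_le {X Y : Type*} [PseudoMetricSpace X]
    [PseudoMetricSpace Y] {F : ℝ → X} {G : ℝ → Y} (hG : AbsolutelyContinuousOnInterval G a b)
    (h : ∀ x ∈ uIcc a b, ∀ y ∈ uIcc a b, dist (F x) (F y) ≤ dist (G x) (G y)) :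
    AbsolutelyContinuousOnInterval F a b := by
  refine squeeze_zero' (.of_forall fun _ => Finset.sum_nonneg fun _ _ => dist_nonneg) ?_ hG
  rw [eventually_inf_principal]
  exact .of_forall fun J hJ =>
    Finset.sum_le_sum fun i hi => h _ (hJ.1 i hi).1 _ (hJ.1 i hi).2

theorem absolutelyContinuousOnInterval_integral [NormedSpace ℝ E] {g : ℝ → E}
    (hg : IntervalIntegrable g volume a b) :
    AbsolutelyContinuousOnInterval (fun x => ∫ t in a..x, g t) a b := by
  refine absolutelyContinuousOnInterval_of_dist_le
    (hg.norm.absolutelyContinuousOnInterval_intervalIntegral left_mem_uIcc) fun x hx y hy => ?_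
  have integrable_to {z : ℝ} (hz : z ∈ uIcc a b) : IntervalIntegrable g volume a z :=
    hg.mono_set (uIcc_subset_uIcc_left hz)
  rw [dist_eq_norm, dist_eq_norm,
    intervalIntegral.integral_interval_sub_left (integrable_to hx) (integrable_to hy),
    intervalIntegral.integral_interval_sub_left (integrable_to hx).norm (integrable_to hy).norm]
  exact intervalIntegral.norm_integral_le_abs_integral_norm

theorem absolutelyContinuousOnInterval_inner [InnerProductSpace ℝ E] {F G : ℝ → E}
    (hF : AbsolutelyContinuousOnInterval F a b) (hG : AbsolutelyContinuousOnInterval G a b) :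
    AbsolutelyContinuousOnInterval (fun x => inner ℝ (F x) (G x)) a b := by
  have norm_sq {H : ℝ → E} (hH : AbsolutelyContinuousOnInterval H a b) :
      AbsolutelyContinuousOnInterval (fun x => ‖H x‖ * ‖H x‖) a b := by
    have h : AbsolutelyContinuousOnInterval (fun x => ‖H x‖) a b :=
      absolutelyContinuousOnInterval_of_dist_le hH fun x _ y _ =>
        (dist_norm_norm_le _ _).trans_eq (dist_eq_norm _ _).symm
    exact h.fun_mul h
  simp only [real_inner_eq_norm_add_mul_self_sub_norm_mul_self_sub_norm_mul_self_div_two,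
    div_eq_inv_mul]
  exact (((norm_sq (hF.add hG)).fun_sub (norm_sq hF)).fun_sub (norm_sq hG)).const_mul _

end AbsolutelyContinuous

section Primitive

variable {E : Type*} [NormedAddCommGroup E] [NormedSpace ℝ E] {a b x y : ℝ} {w w' z z' : ℝ → E}

/-- `w` is a primitive of the integrable function `w'` on `[a, b]`; equivalently, `w` is absolutely
continuous on `[a, b]` with almost everywhere derivative `w'`. -/
structure IsPrimitiveOn (a b : ℝ) (w w' : ℝ → E) : Prop where
  intervalIntegrable : IntervalIntegrable w' volume a b
  eq_add_integral : ∀ x ∈ Icc a b, w x = w a + ∫ t in a..x, w' t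

theorem isPrimitiveOn_integral (hw' : IntervalIntegrable w' volume a b) :
    IsPrimitiveOn a b (fun x => ∫ t in a..x, w' t) w' :=
  ⟨hw', fun x _ => by simp⟩

theorem isPrimitiveOn_const (v : E) : IsPrimitiveOn a b (fun _ => v) fun _ => 0 :=
  ⟨intervalIntegrable_const, fun x _ => by simp⟩

theorem isPrimitiveOn_of_hasDerivAt [CompleteSpace E] (hw : ∀ x, HasDerivAt w (w' x) x)
    (hw' : ContinuousOn w' (uIcc a b)) : IsPrimitiveOn a b w w' where
  intervalIntegrable := hw'.intervalIntegrable
  eq_add_integral x hx := by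
    rw [intervalIntegral.integral_eq_sub_of_hasDerivAt (fun y _ => hw y)
      (hw'.mono (uIcc_subset_uIcc_left (Icc_subset_uIcc hx))).intervalIntegrable,
      add_sub_cancel]

namespace IsPrimitiveOn

theorem integral_eq_sub (hw : IsPrimitiveOn a b w w') (hx : x ∈ Icc a b) (hy : y ∈ Icc a b) :
    ∫ t in x..y, w' t = w y - w x := by
  have integrable_to {z : ℝ} (hz : z ∈ Icc a b) : IntervalIntegrable w' volume a z :=
    hw.intervalIntegrable.mono_set (uIcc_subset_uIcc_left (Icc_subset_uIcc hz))
  rw [hw.eq_add_integral y hy, hw.eq_add_integral x hx, add_sub_add_left_eq_sub,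
    intervalIntegral.integral_interval_sub_left (integrable_to hy) (integrable_to hx)]

theorem continuousOn (hw : IsPrimitiveOn a b w w') : ContinuousOn w (Icc a b) := by
  have h : ContinuousOn (fun x => w a + ∫ t in a..x, w' t) (uIcc a b) :=
    continuousOn_const.add
      (intervalIntegral.continuousOn_primitive_interval' hw.intervalIntegrable left_mem_uIcc)
  exact (h.mono Icc_subset_uIcc).congr hw.eq_add_integral

theorem add (hw : IsPrimitiveOn a b w w') (hz : IsPrimitiveOn a b z z') :
    IsPrimitiveOn a b (fun x => w x + z x) fun x => w' x + z' x where
  intervalIntegrable := hw.intervalIntegrable.add hz.intervalIntegrable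
  eq_add_integral x hx := by
    have hxx := uIcc_subset_uIcc_left (Icc_subset_uIcc hx)
    rw [intervalIntegral.integral_add (hw.intervalIntegrable.mono_set hxx)
      (hz.intervalIntegrable.mono_set hxx), hw.eq_add_integral x hx, hz.eq_add_integral x hx]
    abel

theorem const_smul (c : ℝ) (hw : IsPrimitiveOn a b w w') :
    IsPrimitiveOn a b (fun x => c • w x) fun x => c • w' x where
  intervalIntegrable := hw.intervalIntegrable.smul c
  eq_add_integral x hx := by
    rw [intervalIntegral.integral_smul, hw.eq_add_integral x hx, smul_add]

theorem sub (hw : IsPrimitiveOn a b w w') (hz : IsPrimitiveOn a b z z') :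
    IsPrimitiveOn a b (fun x => w x - z x) fun x => w' x - z' x := by
  simpa [sub_eq_add_neg] using hw.add (hz.const_smul (-1))

theorem integral_inner_add_inner {E : Type*} [NormedAddCommGroup E] [InnerProductSpace ℝ E]
    [CompleteSpace E] {w w' z z' : ℝ → E} (hab : a ≤ b) (hw : IsPrimitiveOn a b w w')
    (hz : IsPrimitiveOn a b z z') :
    ∫ x in a..b, (inner ℝ (w' x) (z x) + inner ℝ (w x) (z' x))
      = inner ℝ (w b) (z b) - inner ℝ (w a) (z a) := by
  have ac {v v' : ℝ → E} (hv : IsPrimitiveOn a b v v') :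
      AbsolutelyContinuousOnInterval (fun x => v a + ∫ t in a..x, v' t) a b :=
    (LipschitzWith.const _).lipschitzOnWith.absolutelyContinuousOnInterval.add
      (absolutelyContinuousOnInterval_integral hv.intervalIntegrable)
  have ftc := (absolutelyContinuousOnInterval_inner (ac hw) (ac hz)).integral_deriv_eq_sub
  simp only [← hw.eq_add_integral b (right_mem_Icc.2 hab),
    ← hz.eq_add_integral b (right_mem_Icc.2 hab), intervalIntegral.integral_same, add_zero] at ftc
  rw [← ftc]
  refine intervalIntegral.integral_congr_ae ?_
  filter_upwards [hw.intervalIntegrable.ae_hasDerivAt_integral,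
    hz.intervalIntegrable.ae_hasDerivAt_integral] with x hwx hzx hx
  have hxu : x ∈ uIcc a b := uIoc_subset_uIcc hx
  have hxI : x ∈ Icc a b := uIcc_of_le hab ▸ hxu
  rw [(((hwx hxu a left_mem_uIcc).const_add (w a)).inner ℝ
    ((hzx hxu a left_mem_uIcc).const_add (z a))).deriv, ← hw.eq_add_integral x hxI,
    ← hz.eq_add_integral x hxI, add_comm]

end IsPrimitiveOn

end Primitive

section SquareIntegrable

variable {E : Type*} [NormedAddCommGroup E] {a b : ℝ} {w : ℝ → E} {p : ℝ≥0∞}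

theorem integral_Ioo_eq_intervalIntegral [NormedSpace ℝ E] (hab : a ≤ b) :
    ∫ x in Ioo a b, w x = ∫ x in a..b, w x := by
  rw [intervalIntegral.integral_of_le hab, integral_Ioc_eq_integral_Ioo]

theorem memLp_Ioo_of_continuousOn_Icc (hw : ContinuousOn w (Icc a b)) :
    MemLp w p (volume.restrict (Ioo a b)) := by
  obtain ⟨C, hC⟩ := isCompact_Icc.exists_bound_of_continuousOn hw
  exact .of_bound ((hw.mono Ioo_subset_Icc_self).aestronglyMeasurable measurableSet_Ioo) C <|
    (ae_restrict_iff' measurableSet_Ioo).2 <| .of_forall fun x hx => hC x (Ioo_subset_Icc_self hx)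

theorem intervalIntegrable_of_memLp_Ioo (hab : a ≤ b) (hp : 1 ≤ p)
    (hw : MemLp w p (volume.restrict (Ioo a b))) : IntervalIntegrable w volume a b :=
  (intervalIntegrable_iff_integrableOn_Ioo_of_le hab).2 (hw.integrable hp)

theorem integrable_inner_of_memLp_two [InnerProductSpace ℝ E] {X : Type*} [MeasurableSpace X]
    {μ : Measure X} {w z : X → E} (hw : MemLp w 2 μ) (hz : MemLp z 2 μ) :
    Integrable (fun x => inner ℝ (w x) (z x)) μ :=
  (hw.norm.integrable_mul hz.norm).mono' (hw.1.inner hz.1) (.of_forall fun _ =>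
    norm_inner_le_norm _ _)

end SquareIntegrable

section DuBoisReymond

variable {E : Type*} [NormedAddCommGroup E] [InnerProductSpace ℝ E] [CompleteSpace E] {a b : ℝ}
  {g P : ℝ → E}

theorem integral_eq_zero_and_ae_eq_integral_of_weak (hab : a ≤ b)
    (hg : MemLp g 2 (volume.restrict (Ioo a b))) (hP : MemLp P 2 (volume.restrict (Ioo a b)))
    (h : ∀ v v', IsPrimitiveOn a b v v' → MemLp v' 2 (volume.restrict (Ioo a b)) →
      ∫ x in Ioo a b, (inner ℝ (g x) (v x) + inner ℝ (P x) (v' x)) = 0) :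
    ∫ x in a..b, g x = 0 ∧ ∀ᵐ x ∂volume.restrict (Ioo a b), P x = ∫ t in a..x, g t := by
  have hgi := intervalIntegrable_of_memLp_Ioo hab one_le_two hg
  set G := fun x => ∫ t in a..x, g t
  have hG : IsPrimitiveOn a b G g := isPrimitiveOn_integral hgi
  have hG2 : MemLp G 2 (volume.restrict (Ioo a b)) := memLp_Ioo_of_continuousOn_Icc hG.continuousOn
  have hGb : G b = 0 := by
    refine ext_inner_left ℝ fun c => ?_
    have h_const := h _ _ (isPrimitiveOn_const c) MemLp.zero
    simp only [inner_zero_right, add_zero, real_inner_comm c] at h_const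
    rw [integral_inner (hg.integrable one_le_two), integral_Ioo_eq_intervalIntegral hab] at h_const
    rw [inner_zero_right, h_const]
  have hz2 : MemLp (fun x => P x - G x) 2 (volume.restrict (Ioo a b)) := hP.sub hG2
  set v := fun x => ∫ t in a..x, P t - G t
  have hv : IsPrimitiveOn a b v fun x => P x - G x :=
    isPrimitiveOn_integral (intervalIntegrable_of_memLp_Ioo hab one_le_two hz2)
  have hv2 : MemLp v 2 (volume.restrict (Ioo a b)) := memLp_Ioo_of_continuousOn_Icc hv.continuousOn
  have by_parts : ∫ x in Ioo a b, (inner ℝ (g x) (v x) + inner ℝ (G x) (P x - G x)) = 0 := by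
    rw [integral_Ioo_eq_intervalIntegral hab, hG.integral_inner_add_inner hab hv, hGb]
    simp [G]
  have norm_sq_integral : ∫ x in Ioo a b, ‖P x - G x‖ ^ 2 = 0 := calc
    _ = (∫ x in Ioo a b, (inner ℝ (g x) (v x) + inner ℝ (P x) (P x - G x)))
        - ∫ x in Ioo a b, (inner ℝ (g x) (v x) + inner ℝ (G x) (P x - G x)) := by
      rw [← integral_sub]
      · congr 1 with x
        rw [add_sub_add_left_eq_sub, ← inner_sub_left, real_inner_self_eq_norm_sq]
      · exact (integrable_inner_of_memLp_two hg hv2).add (integrable_inner_of_memLp_two hP hz2)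
      · exact (integrable_inner_of_memLp_two hg hv2).add (integrable_inner_of_memLp_two hG2 hz2)
    _ = 0 := by rw [h v _ hv hz2, by_parts, sub_zero]
  rw [integral_eq_zero_iff_of_nonneg (fun x => by positivity)
    ((memLp_two_iff_integrable_sq_norm hz2.1).1 hz2)] at norm_sq_integral
  refine ⟨hGb, norm_sq_integral.mono fun x hx => ?_⟩
  exact sub_eq_zero.1 (norm_eq_zero.1 ((pow_eq_zero_iff two_ne_zero).1 hx))

end DuBoisReymond

/-! ### The Euler-Lagrange equation -/

section EulerLagrange

/-- The integrand of `E_ε` as a function of `y = w(x) - f(x)` and `q = w'(x)`. -/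
def regIntegrand {E : Type*} [NormedAddCommGroup E] (lam ε : ℝ) (y q : E) : ℝ :=
  (1 / (2 * lam)) * ‖y‖ ^ 2 + regNorm ε q + (ε ^ 2 / 2) * ‖q‖ ^ 2

theorem regIntegrand_add_smul_le {E : Type*} [NormedAddCommGroup E] [InnerProductSpace ℝ E]
    {lam ε : ℝ} (hε : 0 < ε) (y q z v : E) (t : ℝ) :
    regIntegrand lam ε (y + t • z) (q + t • v) ≤ regIntegrand lam ε y q
      + t * (inner ℝ ((1 / lam) • y) z + inner ℝ (regFlux ε q) v)
      + t ^ 2 * ((1 / (2 * lam)) * ‖z‖ ^ 2 + ((2 * ε)⁻¹ + ε ^ 2 / 2) * ‖v‖ ^ 2) := by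
  have h := regNorm_add_le hε q (t • v)
  have norm_sq_add_smul (x d : E) :
      ‖x + t • d‖ ^ 2 = ‖x‖ ^ 2 + 2 * (t * inner ℝ x d) + t ^ 2 * ‖d‖ ^ 2 := by
    rw [norm_add_sq_real, real_inner_smul_right, norm_smul, mul_pow, Real.norm_eq_abs, sq_abs]
  rw [real_inner_smul_right, norm_smul, mul_pow, Real.norm_eq_abs, sq_abs] at h
  simp only [regIntegrand, norm_sq_add_smul, regFlux, real_inner_smul_left]
  ring_nf at h ⊢
  linarith

variable {n : ℕ} {a b lam ε : ℝ} {f u u' v v' w w' : ℝ → EuclideanSpace ℝ (Fin n)}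

theorem integrableOn_regIntegrand (hf : ContinuousOn f (Icc a b)) (hw : ContinuousOn w (Icc a b))
    (hw' : IntegrableOn (fun x => ‖w' x‖ ^ 2) (Ioo a b)) :
    IntegrableOn (fun x => regIntegrand lam ε (w x - f x) (w' x)) (Ioo a b) := by
  have h_fidelity : IntegrableOn (fun x => (1 / (2 * lam)) * ‖w x - f x‖ ^ 2) (Ioo a b) :=
    ((continuousOn_const.mul ((hw.sub hf).norm.pow 2)).integrableOn_compact
      isCompact_Icc).mono_set Ioo_subset_Icc_self
  have h_regNorm : IntegrableOn (fun x => regNorm ε (w' x)) (Ioo a b) := by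
    refine ((hw'.add (integrable_const (ε ^ 2))).add (integrable_const 1)).mono'
      (Real.continuous_sqrt.comp_aestronglyMeasurable (hw'.1.add aestronglyMeasurable_const))
      (.of_forall fun x => ?_)
    change ‖regNorm ε (w' x)‖ ≤ ‖w' x‖ ^ 2 + ε ^ 2 + 1
    rw [Real.norm_of_nonneg (regNorm_nonneg _ _), ← sq_regNorm]
    linarith [sq_nonneg (regNorm ε (w' x) - 1), sq_nonneg (regNorm ε (w' x))]
  exact (h_fidelity.add h_regNorm).add (hw'.const_mul _)

theorem regEnergy_eq_integral_regIntegrand (lam ε a b : ℝ)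
    (f w w' : ℝ → EuclideanSpace ℝ (Fin n)) :
    regEnergy lam ε a b f w w' = ∫ x in Ioo a b, regIntegrand lam ε (w x - f x) (w' x) :=
  rfl

theorem memLp_two_regFlux {E X : Type*} [NormedAddCommGroup E] [InnerProductSpace ℝ E]
    [MeasurableSpace X] {μ : Measure X} {q : X → E} (hε : 0 < ε) (hq : MemLp q 2 μ) :
    MemLp (fun x => regFlux ε (q x)) 2 μ :=
  hq.of_le_mul ((contDiff_regFlux (k := 0) hε).continuous.comp_aestronglyMeasurable hq.1)
    (.of_forall fun x => norm_regFlux_le hε (q x))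

theorem exists_regEnergy_add_smul_le (hε : 0 < ε) (hf : ContinuousOn f (Icc a b))
    (hw : ContinuousOn w (Icc a b)) (hw' : MemLp w' 2 (volume.restrict (Ioo a b)))
    (hv : ContinuousOn v (Icc a b)) (hv' : MemLp v' 2 (volume.restrict (Ioo a b))) :
    ∃ C, ∀ t, regEnergy lam ε a b f (fun x => w x + t • v x) (fun x => w' x + t • v' x)
      ≤ regEnergy lam ε a b f w w' + t * (∫ x in Ioo a b,
        (inner ℝ ((1 / lam) • (w x - f x)) (v x) + inner ℝ (regFlux ε (w' x)) (v' x)))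
        + t ^ 2 * C := by
  set ℓ := fun x => inner ℝ ((1 / lam) • (w x - f x)) (v x) + inner ℝ (regFlux ε (w' x)) (v' x)
    with hℓ_def
  set κ := fun x => (1 / (2 * lam)) * ‖v x‖ ^ 2 + ((2 * ε)⁻¹ + ε ^ 2 / 2) * ‖v' x‖ ^ 2 with hκ_def
  have norm_sq_integrable {z : ℝ → EuclideanSpace ℝ (Fin n)}
      (hz : MemLp z 2 (volume.restrict (Ioo a b))) : IntegrableOn (fun x => ‖z x‖ ^ 2) (Ioo a b) :=
    (memLp_two_iff_integrable_sq_norm hz.1).1 hz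
  have h_residual : MemLp (fun x => (1 / lam) • (w x - f x)) 2 (volume.restrict (Ioo a b)) :=
    memLp_Ioo_of_continuousOn_Icc ((hw.sub hf).const_smul (1 / lam))
  have hℓ : IntegrableOn ℓ (Ioo a b) :=
    (integrable_inner_of_memLp_two h_residual (memLp_Ioo_of_continuousOn_Icc hv)).add
      (integrable_inner_of_memLp_two (memLp_two_regFlux hε hw') hv')
  have hκ : IntegrableOn κ (Ioo a b) :=
    ((norm_sq_integrable (memLp_Ioo_of_continuousOn_Icc hv)).const_mul _).add
      ((norm_sq_integrable hv').const_mul _)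
  have hi := integrableOn_regIntegrand (lam := lam) (ε := ε) hf hw (norm_sq_integrable hw')
  refine ⟨∫ x in Ioo a b, κ x, fun t => ?_⟩
  have hiℓ : IntegrableOn (fun x => regIntegrand lam ε (w x - f x) (w' x) + t * ℓ x) (Ioo a b) :=
    hi.add (hℓ.const_mul t)
  rw [regEnergy_eq_integral_regIntegrand, regEnergy_eq_integral_regIntegrand,
    ← integral_const_mul, ← integral_const_mul, ← integral_add hi (hℓ.const_mul t),
    ← integral_add hiℓ (hκ.const_mul _)]
  refine integral_mono (integrableOn_regIntegrand hf (hw.add (hv.const_smul t))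
    (norm_sq_integrable (hw'.add (hv'.const_smul t))))
    (hiℓ.add (hκ.const_mul _)) fun x => ?_
  simp only [add_sub_right_comm, hℓ_def, hκ_def]
  exact regIntegrand_add_smul_le hε _ _ _ _ t

theorem IsPrimitiveOn.inH1 (hw : IsPrimitiveOn a b w w')
    (hw' : MemLp w' 2 (volume.restrict (Ioo a b))) : InH1 a b w w' :=
  ⟨hw.continuousOn, (memLp_two_iff_integrable_sq_norm hw'.1).1 hw',
    fun _ hx _ hy => (hw.integral_eq_sub hx hy).symm⟩

namespace InH1

theorem isPrimitiveOn (hab : a ≤ b) (h : InH1 a b w w') (hw' : IntervalIntegrable w' volume a b) :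
    IsPrimitiveOn a b w w' :=
  ⟨hw', fun x hx => by rw [← h.2.2 a (left_mem_Icc.2 hab) x hx, add_sub_cancel]⟩

/-- Since a non-integrable `w'` has integral `0` by convention, `InH1` admits such a `w'` as the
derivative of a constant. -/
theorem isPrimitiveOn_or_isPrimitiveOn_zero (hab : a ≤ b) (h : InH1 a b w w') :
    IsPrimitiveOn a b w w' ∨ IsPrimitiveOn a b w fun _ => 0 := by
  refine or_iff_not_imp_left.2 fun h_not => ⟨intervalIntegrable_const, fun x hx => ?_⟩
  have hi : ¬ IntervalIntegrable w' volume a b := fun hi => h_not (h.isPrimitiveOn hab hi)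
  have increment {y z : ℝ} (hy : y ∈ Icc a b) (hz : z ∈ Icc a b)
      (hyz : ¬ IntervalIntegrable w' volume y z) : w z = w y :=
    sub_eq_zero.1 ((h.2.2 y hy z hz).trans (intervalIntegral.integral_undef hyz))
  have ha := left_mem_Icc.2 hab
  have hb := right_mem_Icc.2 hab
  rw [intervalIntegral.integral_zero, add_zero]
  by_cases hax : IntervalIntegrable w' volume a x
  · rw [← increment ha hb hi, increment hx hb fun hxb => hi (hax.trans hxb)]
  · exact increment ha hx hax

theorem memLp_two (hab : a ≤ b) (h : InH1 a b w w') (hw : IsPrimitiveOn a b w w') :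
    MemLp w' 2 (volume.restrict (Ioo a b)) :=
  (memLp_two_iff_integrable_sq_norm ((intervalIntegrable_iff_integrableOn_Ioo_of_le hab).1
    hw.intervalIntegrable).1).2 h.2.1

end InH1

namespace IsMinimizerEps

/-- If `u'` is not integrable then `u` has the competing derivative `0`, and minimality against it
forces `u' = 0` almost everywhere. -/
theorem isPrimitiveOn (hab : a ≤ b) (hε : 0 < ε) (hf : ContinuousOn f (Icc a b))
    (h : IsMinimizerEps lam ε a b f u u') : IsPrimitiveOn a b u u' := by
  refine (h.1.isPrimitiveOn_or_isPrimitiveOn_zero hab).elim id fun hu0 => ?_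
  have hu' := h.1.2.1
  have le_zero_deriv := h.2 u _ (hu0.inH1 MemLp.zero)
  have add_sq_le : regEnergy lam ε a b f u (fun _ => 0) + ∫ x in Ioo a b, ε ^ 2 / 2 * ‖u' x‖ ^ 2
      ≤ regEnergy lam ε a b f u u' := by
    rw [regEnergy_eq_integral_regIntegrand, regEnergy_eq_integral_regIntegrand,
      ← integral_add (integrableOn_regIntegrand hf h.1.1 (by simp)) (hu'.const_mul _)]
    refine integral_mono ((integrableOn_regIntegrand hf h.1.1 (by simp)).add (hu'.const_mul _))
      (integrableOn_regIntegrand hf h.1.1 hu') fun x => ?_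
    simp only [regIntegrand, norm_zero]
    linarith [regNorm_zero_le ε (u' x)]
  have sq_integral_eq_zero : ∫ x in Ioo a b, ε ^ 2 / 2 * ‖u' x‖ ^ 2 = 0 :=
    le_antisymm (by linarith) (integral_nonneg fun x => by positivity)
  rw [integral_eq_zero_iff_of_nonneg (fun x => by positivity) (hu'.const_mul _)]
    at sq_integral_eq_zero
  refine h.1.isPrimitiveOn hab ((intervalIntegrable_iff_integrableOn_Ioo_of_le hab).2 ?_)
  refine (integrable_zero ℝ (EuclideanSpace ℝ (Fin n)) _).congr
    (sq_integral_eq_zero.mono fun x hx => ?_)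
  have : ‖u' x‖ ^ 2 = 0 := (mul_eq_zero.1 hx).resolve_left (by positivity)
  exact (norm_eq_zero.1 ((pow_eq_zero_iff two_ne_zero).1 this)).symm

theorem memLp_two (hab : a ≤ b) (hε : 0 < ε) (hf : ContinuousOn f (Icc a b))
    (h : IsMinimizerEps lam ε a b f u u') : MemLp u' 2 (volume.restrict (Ioo a b)) :=
  h.1.memLp_two hab (h.isPrimitiveOn hab hε hf)

theorem weak_eulerLagrange (hab : a ≤ b) (hε : 0 < ε) (hf : ContinuousOn f (Icc a b))
    (h : IsMinimizerEps lam ε a b f u u') (hv : IsPrimitiveOn a b v v')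
    (hv' : MemLp v' 2 (volume.restrict (Ioo a b))) :
    ∫ x in Ioo a b, (inner ℝ ((1 / lam) • (u x - f x)) (v x) + inner ℝ (regFlux ε (u' x)) (v' x))
      = 0 := by
  have hu := h.isPrimitiveOn hab hε hf
  have hu' := h.memLp_two hab hε hf
  obtain ⟨C, hC⟩ := exists_regEnergy_add_smul_le (lam := lam) hε hf h.1.1 hu' hv.continuousOn hv'
  set L := ∫ x in Ioo a b,
    (inner ℝ ((1 / lam) • (u x - f x)) (v x) + inner ℝ (regFlux ε (u' x)) (v' x))
  have variation_nonneg (t : ℝ) : 0 ≤ C * (t * t) + L * t + 0 := by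
    have h_min := h.2 _ _ ((hu.add (hv.const_smul t)).inH1 (hu'.add (hv'.const_smul t)))
    linarith [hC t]
  have h_discrim := discrim_le_zero variation_nonneg
  rw [discrim, mul_zero, sub_zero] at h_discrim
  exact (pow_eq_zero_iff two_ne_zero).1 (le_antisymm h_discrim (sq_nonneg L))

end IsMinimizerEps

end EulerLagrange

section Regularity

variable {E : Type*} [NormedAddCommGroup E] [InnerProductSpace ℝ E] [CompleteSpace E] {a b ε : ℝ}

theorem exists_contDiff_inverse_regFlux (hε : 0 < ε) {k : WithTop ℕ∞} (hk : k ≠ 0) :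
    ∃ Ψ : E → E, ContDiff ℝ k Ψ ∧ Function.LeftInverse Ψ (regFlux ε) ∧
      Function.RightInverse Ψ (regFlux ε) := by
  refine exists_contDiff_inverse_of_coercive_fderiv hk (contDiff_regFlux hε) (sq_pos_of_pos hε)
    fun q v => ?_
  rw [(hasFDerivAt_regFlux hε q).fderiv]
  exact le_inner_regFluxDeriv_self hε q v

theorem injective_regFlux (hε : 0 < ε) : Function.Injective (regFlux ε : E → E) :=
  let ⟨_, _, h_left, _⟩ := exists_contDiff_inverse_regFlux hε one_ne_zero
  h_left.injective

theorem exists_contDiff_regFlux_eq_integral (hab : a ≤ b) (hε : 0 < ε) {g : ℝ → E}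
    (hg : ContinuousOn g (Icc a b)) :
    ∃ q : ℝ → E, ContDiff ℝ 1 q ∧ (∀ x ∈ Icc a b, regFlux ε (q x) = ∫ t in a..x, g t) ∧
      ∀ x ∈ Icc a b, regFluxDeriv ε (q x) (deriv q x) = g x := by
  obtain ⟨Ψ, hΨ, -, hΨ_right⟩ := exists_contDiff_inverse_regFlux (E := E) hε one_ne_zero
  set g_ext := IccExtend hab ((Icc a b).domRestrict g)
  have hg_ext : Continuous g_ext := hg.domRestrict.Icc_extend'
  have g_ext_eq {x : ℝ} (hx : x ∈ Icc a b) : g_ext x = g x := IccExtend_of_mem _ _ hx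
  set σ := fun x => ∫ t in a..x, g_ext t
  have hσ (x : ℝ) : HasDerivAt σ (g_ext x) x := (hg_ext.integral_hasStrictDerivAt a x).hasDerivAt
  have hσ_contDiff : ContDiff ℝ 1 σ :=
    contDiff_one_iff_deriv.2
      ⟨fun x => (hσ x).differentiableAt, by rwa [funext fun x => (hσ x).deriv]⟩
  have hq : ContDiff ℝ 1 fun x => Ψ (σ x) := hΨ.comp hσ_contDiff
  refine ⟨fun x => Ψ (σ x), hq, fun x hx => ?_, fun x hx => ?_⟩
  · rw [hΨ_right]
    refine intervalIntegral.integral_congr fun t ht => g_ext_eq ?_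
    rw [uIcc_of_le hx.1] at ht
    exact ⟨ht.1, ht.2.trans hx.2⟩
  · have h_chain := (hasFDerivAt_regFlux hε _).comp_hasDerivAt x
      (hq.differentiable one_ne_zero x).hasDerivAt
    rw [← g_ext_eq hx]
    exact h_chain.unique ((hσ x).congr_of_eventuallyEq (.of_forall fun t => hΨ_right (σ t)))

variable {n : ℕ} {lam : ℝ} {f u u' : ℝ → EuclideanSpace ℝ (Fin n)}

theorem IsMinimizerEps.exists_contDiff_ae_eq_deriv (hab : a ≤ b) (hε : 0 < ε)
    (hf : ContinuousOn f (Icc a b)) (h : IsMinimizerEps lam ε a b f u u') :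
    ∃ q, ContDiff ℝ 1 q ∧ q a = 0 ∧ q b = 0 ∧ (∀ᵐ x ∂volume.restrict (Ioo a b), u' x = q x) ∧
      ∀ x ∈ Icc a b, regFluxDeriv ε (q x) (deriv q x) = (1 / lam) • (u x - f x) := by
  have h_residual : ContinuousOn (fun x => (1 / lam) • (u x - f x)) (Icc a b) :=
    (h.1.1.sub hf).const_smul (1 / lam)
  obtain ⟨q, hq, h_flux, h_deriv⟩ := exists_contDiff_regFlux_eq_integral hab hε h_residual
  obtain ⟨h_mean, h_ae⟩ := integral_eq_zero_and_ae_eq_integral_of_weak hab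
    (memLp_Ioo_of_continuousOn_Icc h_residual) (memLp_two_regFlux hε (h.memLp_two hab hε hf))
    fun v v' hv hv' => h.weak_eulerLagrange hab hε hf hv hv'
  refine ⟨q, hq, injective_regFlux hε ?_, injective_regFlux hε ?_, ?_, h_deriv⟩
  · rw [h_flux a (left_mem_Icc.2 hab), intervalIntegral.integral_same, regFlux_zero]
  · rw [h_flux b (right_mem_Icc.2 hab), h_mean, regFlux_zero]
  · filter_upwards [h_ae, ae_restrict_mem measurableSet_Ioo] with x hx hxI
    exact injective_regFlux hε (hx.trans (h_flux x (Ioo_subset_Icc_self hxI)).symm)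

end Regularity

/-! ### The weighted gradient estimate -/

section WeightedTest

variable {E : Type*} [NormedAddCommGroup E] {a b ε p : ℝ}

/-- The primitive `G(s) = s ^ p / p + s ^ (p - 3) / (p - 3)` of `s ^ (p - 1) + s ^ (p - 4)`. It
collects the terms that carry a derivative of the cutoff in the gradient estimate. -/
def regPotential (p s : ℝ) : ℝ := s ^ p / p + s ^ (p - 3) / (p - 3)

theorem continuous_regPotential_regNorm (hε : 0 < ε) (p : ℝ) :
    Continuous fun v : E => regPotential p (regNorm ε v) :=
  ((continuous_regNorm_rpow hε p).div_const p).add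
    ((continuous_regNorm_rpow hε (p - 3)).div_const (p - 3))

variable [InnerProductSpace ℝ E]

theorem hasDerivAt_regNorm_rpow_comp (hε : 0 < ε) {q : ℝ → E} {v : E} {x : ℝ}
    (hq : HasDerivAt q v x) (c : ℝ) : HasDerivAt (fun t => regNorm ε (q t) ^ c)
      (c * regNorm ε (q x) ^ (c - 2) * inner ℝ (q x) v) x := by
  have hs := (regNorm_pos hε (q x)).ne'
  have h := ((hasFDerivAt_regNorm hε (q x)).comp_hasDerivAt x hq).rpow_const (p := c) (.inl hs)
  refine h.congr_deriv ?_
  have : regNorm ε (q x) ^ (c - 1) = regNorm ε (q x) ^ (c - 2) * regNorm ε (q x) := by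
    rw [← Real.rpow_add_one hs]
    ring_nf
  simp only [smul_apply, innerSL_apply_apply, smul_eq_mul, Function.comp_apply, this]
  field_simp

theorem hasDerivAt_regPotential_regNorm_comp (hε : 0 < ε) (hp : p ≠ 0) (hp3 : p ≠ 3) {q : ℝ → E}
    {v : E} {x : ℝ} (hq : HasDerivAt q v x) :
    HasDerivAt (fun t => regPotential p (regNorm ε (q t)))
      ((regNorm ε (q x) ^ (p - 2) + regNorm ε (q x) ^ (p - 5)) * inner ℝ (q x) v) x := by
  refine (((hasDerivAt_regNorm_rpow_comp hε hq p).div_const p).add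
    ((hasDerivAt_regNorm_rpow_comp hε hq (p - 3)).div_const (p - 3))).congr_deriv ?_
  have : p - 3 ≠ 0 := sub_ne_zero.2 hp3
  rw [show p - 3 - 2 = p - 5 by ring]
  field_simp

theorem hasDerivAt_mul_regNorm_rpow_smul (hε : 0 < ε) {q : ℝ → E} {v : E} {η : ℝ → ℝ} {η' x : ℝ}
    (hη : HasDerivAt η η' x) (hq : HasDerivAt q v x) (p : ℝ) :
    HasDerivAt (fun t => (η t * regNorm ε (q t) ^ (p - 2)) • q t)
      ((η x * regNorm ε (q x) ^ (p - 2)) • v + (η' * regNorm ε (q x) ^ (p - 2)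
        + η x * ((p - 2) * regNorm ε (q x) ^ (p - 4) * inner ℝ (q x) v)) • q x) x := by
  have h := (hη.mul (hasDerivAt_regNorm_rpow_comp hε hq (p - 2))).smul hq
  rwa [show p - 2 - 2 = p - 4 by ring] at h

/-- The terms of `⟪DΦ(q) q', (η |q|_ε ^ (p - 2) q)'⟫` without `η'` are nonnegative by
`regFluxDeriv_weighted_nonneg`; the remaining one is the left-hand side. -/
theorem le_inner_regFluxDeriv_test (hε : 0 < ε) (hp : 1 ≤ p) (q v : E) {η : ℝ} (hη : 0 ≤ η)
    (η' : ℝ) :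
    ε ^ 2 * (((regNorm ε q ^ (p - 2) + regNorm ε q ^ (p - 5)) * inner ℝ q v) * η')
      ≤ inner ℝ (regFluxDeriv ε q v) ((η * regNorm ε q ^ (p - 2)) • v
        + (η' * regNorm ε q ^ (p - 2)
          + η * ((p - 2) * regNorm ε q ^ (p - 4) * inner ℝ q v)) • q) := by
  have hs := regNorm_pos hε q
  have rpow_sub_four : regNorm ε q ^ (p - 4) = regNorm ε q ^ (p - 2) / regNorm ε q ^ 2 := by
    rw [← Real.rpow_sub_natCast hs.ne']
    ring_nf
  have rpow_sub_five : regNorm ε q ^ (p - 5) = regNorm ε q ^ (p - 2) / regNorm ε q ^ 3 := by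
    rw [← Real.rpow_sub_natCast hs.ne']
    ring_nf
  have h_nonneg := mul_nonneg (mul_nonneg hη (Real.rpow_nonneg hs.le (p - 2)))
    (regFluxDeriv_weighted_nonneg hp hε q v)
  rw [← sub_nonneg]
  refine h_nonneg.trans_eq ?_
  rw [inner_add_right, real_inner_smul_right, real_inner_smul_right, inner_regFluxDeriv_left hε,
    rpow_sub_four, rpow_sub_five]
  field_simp
  ring

variable {q : ℝ → E} {η : ℝ → ℝ}

theorem integral_regPotential_mul_deriv_deriv (hε : 0 < ε) (hp : p ≠ 0) (hp3 : p ≠ 3)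
    (hq : ContDiff ℝ 1 q) (hη : ContDiff ℝ 2 η) (hηa : deriv η a = 0) (hηb : deriv η b = 0) :
    ∫ x in a..b, regPotential p (regNorm ε (q x)) * deriv (deriv η) x
      = -∫ x in a..b, ((regNorm ε (q x) ^ (p - 2) + regNorm ε (q x) ^ (p - 5))
        * inner ℝ (q x) (deriv q x)) * deriv η x := by
  have hη' : ContDiff ℝ 1 (deriv η) := hη.iterate_deriv' 1 1
  have hqc := hq.continuous
  have hq' := hq.continuous_deriv_one
  have h_rpow (c : ℝ) := (continuous_regNorm_rpow hε c).comp hqc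
  rw [intervalIntegral.integral_mul_deriv_eq_deriv_mul
    (fun x _ => hasDerivAt_regPotential_regNorm_comp hε hp hp3
      (hq.differentiable one_ne_zero x).hasDerivAt)
    (fun x _ => (hη'.differentiable one_ne_zero x).hasDerivAt)
    (((h_rpow _).add (h_rpow _)).mul (hqc.inner hq')).continuousOn.intervalIntegrable
    hη'.continuous_deriv_one.continuousOn.intervalIntegrable, hηa, hηb]
  simp

theorem integral_inner_mul_regNorm_rpow_smul_le [CompleteSpace E] (hab : a ≤ b) (hε : 0 < ε)
    (hp : 1 ≤ p) (hp3 : p ≠ 3) {g g' : ℝ → E} (hg : IsPrimitiveOn a b g g')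
    (hg' : MemLp g' 2 (volume.restrict (Ioo a b))) (hq : ContDiff ℝ 1 q) (hqa : q a = 0)
    (hqb : q b = 0) (hgq : ∀ x ∈ Icc a b, regFluxDeriv ε (q x) (deriv q x) = g x)
    (hη : ContDiff ℝ 2 η) (hη0 : ∀ x, 0 ≤ η x) (hηa : deriv η a = 0) (hηb : deriv η b = 0) :
    ∫ x in a..b, inner ℝ (g' x) ((η x * regNorm ε (q x) ^ (p - 2)) • q x)
      ≤ ε ^ 2 * ∫ x in a..b, regPotential p (regNorm ε (q x)) * deriv (deriv η) x := by
  have hηc := hη.continuous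
  have hη' := hη.continuous_deriv one_le_two
  have hqc := hq.continuous
  have h_rpow (c : ℝ) : Continuous fun x => regNorm ε (q x) ^ c :=
    (continuous_regNorm_rpow hε c).comp hqc
  set ψ := fun x => (η x * regNorm ε (q x) ^ (p - 2)) • q x
  set ψ' := fun x => (η x * regNorm ε (q x) ^ (p - 2)) • deriv q x
    + (deriv η x * regNorm ε (q x) ^ (p - 2)
      + η x * ((p - 2) * regNorm ε (q x) ^ (p - 4) * inner ℝ (q x) (deriv q x))) • q x
  have hψ'_cont : Continuous ψ' := by fun_prop
  have hψ : IsPrimitiveOn a b ψ ψ' := isPrimitiveOn_of_hasDerivAt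
    (fun x => hasDerivAt_mul_regNorm_rpow_smul hε (hη.differentiable two_ne_zero x).hasDerivAt
      (hq.differentiable one_ne_zero x).hasDerivAt p) hψ'_cont.continuousOn
  have h_left : IntervalIntegrable (fun x => inner ℝ (g' x) (ψ x)) volume a b :=
    (intervalIntegrable_iff_integrableOn_Ioo_of_le hab).2
      (integrable_inner_of_memLp_two hg' (memLp_Ioo_of_continuousOn_Icc hψ.continuousOn))
  have h_right : IntervalIntegrable (fun x => inner ℝ (g x) (ψ' x)) volume a b :=
    (hg.continuousOn.inner hψ'_cont.continuousOn).intervalIntegrable_of_Icc hab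
  have by_parts := hg.integral_inner_add_inner hab hψ
  rw [intervalIntegral.integral_add h_left h_right] at by_parts
  simp only [ψ, hqa, hqb, smul_zero, inner_zero_right, sub_zero] at by_parts
  have h_mono : ε ^ 2 * ∫ x in a..b, ((regNorm ε (q x) ^ (p - 2) + regNorm ε (q x) ^ (p - 5))
      * inner ℝ (q x) (deriv q x)) * deriv η x ≤ ∫ x in a..b, inner ℝ (g x) (ψ' x) := by
    rw [← intervalIntegral.integral_const_mul]
    refine intervalIntegral.integral_mono_on hab
      (Continuous.intervalIntegrable (by fun_prop) a b) h_right fun x hx => ?_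
    rw [← hgq x hx]
    exact le_inner_regFluxDeriv_test hε hp _ _ (hη0 x) _
  rw [integral_regPotential_mul_deriv_deriv hε (by linarith) hp3 hq hη hηa hηb]
  linarith

end WeightedTest

section PointwiseBounds

variable {E : Type*} [NormedAddCommGroup E] {ε p : ℝ}

theorem integrable_norm_rpow_of_memLp_two {X : Type*} [MeasurableSpace X] {μ : Measure X}
    [IsFiniteMeasure μ] {w : X → E} (hp0 : 0 < p) (hp2 : p ≤ 2) (hw : MemLp w 2 μ) :
    Integrable (fun x => ‖w x‖ ^ p) μ := by
  have h : MemLp w (ENNReal.ofReal p) μ :=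
    hw.mono_exponent (ENNReal.ofReal_le_of_le_toReal hp2)
  simpa [ENNReal.toReal_ofReal hp0.le] using
    h.integrable_norm_rpow (ENNReal.ofReal_pos.2 hp0).ne' ENNReal.ofReal_ne_top

theorem sq_mul_rpow_le {s c : ℝ} (hε : 0 < ε) (hs : ε ≤ s) (hc : c ≤ 0) :
    ε ^ 2 * s ^ c ≤ ε ^ (c + 2) := by
  rw [Real.rpow_add hε, Real.rpow_two, mul_comm]
  gcongr ?_ * _
  exact Real.rpow_le_rpow_of_nonpos hε hs hc

theorem abs_sq_mul_regPotential_le {s : ℝ} (hε : 0 < ε) (hs : ε ≤ s) (hp1 : 1 ≤ p) (hp2 : p ≤ 2) :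
    |ε ^ 2 * regPotential p s| ≤ ε ^ 2 * s ^ p + ε ^ (p - 1) := by
  have hs0 : 0 < s := hε.trans_le hs
  have abs_first : |s ^ p / p| ≤ s ^ p := by
    rw [abs_of_nonneg (by positivity)]
    exact div_le_self (by positivity) hp1
  have abs_second : |s ^ (p - 3) / (p - 3)| ≤ s ^ (p - 3) := by
    rw [abs_div, abs_of_pos (by positivity), abs_of_neg (by linarith)]
    exact div_le_self (by positivity) (by linarith)
  calc |ε ^ 2 * regPotential p s|
      = ε ^ 2 * |regPotential p s| := by rw [abs_mul, abs_of_pos (by positivity)]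
    _ ≤ ε ^ 2 * (s ^ p + s ^ (p - 3)) := by
        gcongr
        exact (abs_add_le _ _).trans (add_le_add abs_first abs_second)
    _ ≤ ε ^ 2 * s ^ p + ε ^ (p - 1) := by
        have := sq_mul_rpow_le hε hs (c := p - 3) (by linarith)
        rw [show p - 3 + 2 = p - 1 by ring] at this
        linarith

theorem regNorm_rpow_le [InnerProductSpace ℝ E] (hε : 0 < ε) (hp1 : 1 < p) (hp2 : p ≤ 2)
    (q v : E) : regNorm ε q ^ p
      ≤ ‖v‖ ^ p + p * (regNorm ε q ^ (p - 2) * inner ℝ (q - v) q + ε ^ p) := by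
  have hs := regNorm_pos hε q
  set s := regNorm ε q
  have rpow_eq_mul_sq : s ^ p = s ^ (p - 2) * s ^ 2 := by
    rw [← Real.rpow_two, ← Real.rpow_add hs, sub_add_cancel]
  have rpow_sub_one_eq : s ^ (p - 1) = s ^ (p - 2) * s := by
    rw [← Real.rpow_add_one hs.ne']
    ring_nf
  have h_eps : ε ^ 2 * s ^ (p - 2) ≤ ε ^ p := by
    simpa using sq_mul_rpow_le hε (le_regNorm ε q) (sub_nonpos.2 hp2)
  have h_young : ‖v‖ * s ^ (p - 1) ≤ ‖v‖ ^ p / p + s ^ p * (1 - p⁻¹) := by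
    have h_conj := Real.HolderConjugate.conjExponent hp1
    have h := Real.young_inequality_of_nonneg (norm_nonneg v)
      (Real.rpow_nonneg hs.le (p - 1)) h_conj
    rwa [← Real.rpow_mul hs.le, h_conj.sub_one_mul_conj, div_eq_mul_inv (s ^ p),
      ← h_conj.one_sub_inv] at h
  have h_inner : s ^ (p - 2) * inner ℝ v q ≤ ‖v‖ * s ^ (p - 1) := calc
    _ ≤ s ^ (p - 2) * (‖v‖ * s) := by
      gcongr
      exact (real_inner_le_norm v q).trans (by gcongr; exact norm_le_regNorm ε q)
    _ = ‖v‖ * s ^ (p - 1) := by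
      rw [rpow_sub_one_eq]
      ring
  have h_inner_sub : s ^ (p - 2) * inner ℝ (q - v) q
      = s ^ p - ε ^ 2 * s ^ (p - 2) - s ^ (p - 2) * inner ℝ v q := by
    rw [inner_sub_left, real_inner_self_eq_norm_sq, norm_sq_eq_sq_regNorm_sub ε q,
      rpow_eq_mul_sq]
    ring
  have h_lower : (s ^ p - ‖v‖ ^ p) / p ≤ s ^ (p - 2) * inner ℝ (q - v) q + ε ^ p := by
    rw [h_inner_sub, sub_div, div_eq_mul_inv (s ^ p)]
    linarith
  rw [div_le_iff₀' (by positivity)] at h_lower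
  linarith

end PointwiseBounds

section FixedEps

variable {E : Type*} [NormedAddCommGroup E] {a b ε p K : ℝ} {q v : ℝ → E} {η θ : ℝ → ℝ}

theorem integral_mul_regNorm_rpow_le_add_inner [InnerProductSpace ℝ E] (hab : a ≤ b) (hε : 0 < ε)
    (hp1 : 1 < p) (hp2 : p ≤ 2) (hq : Continuous q) (hv : MemLp v 2 (volume.restrict (Ioo a b)))
    (hη : Continuous η) (hη0 : ∀ x, 0 ≤ η x) :
    ∫ x in a..b, η x * regNorm ε (q x) ^ p ≤ (∫ x in a..b, η x * ‖v x‖ ^ p)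
      + p * ((∫ x in a..b, inner ℝ (q x - v x) ((η x * regNorm ε (q x) ^ (p - 2)) • q x))
        + ε ^ p * ∫ x in a..b, η x) := by
  have h_rpow (c : ℝ) : Continuous fun x => regNorm ε (q x) ^ c :=
    (continuous_regNorm_rpow hε c).comp hq
  have h_v : IntervalIntegrable (fun x => η x * ‖v x‖ ^ p) volume a b :=
    ((intervalIntegrable_iff_integrableOn_Ioo_of_le hab).2
      (integrable_norm_rpow_of_memLp_two (by linarith) hp2 hv)).continuousOn_mul hη.continuousOn
  have h_test : IntervalIntegrable
      (fun x => inner ℝ (q x - v x) ((η x * regNorm ε (q x) ^ (p - 2)) • q x)) volume a b :=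
    (intervalIntegrable_iff_integrableOn_Ioo_of_le hab).2 <| integrable_inner_of_memLp_two
      ((memLp_Ioo_of_continuousOn_Icc hq.continuousOn).sub hv)
      (memLp_Ioo_of_continuousOn_Icc (by fun_prop))
  have h_η : IntervalIntegrable (fun x => ε ^ p * η x) volume a b :=
    (hη.intervalIntegrable a b).const_mul _
  rw [← intervalIntegral.integral_const_mul (ε ^ p), ← intervalIntegral.integral_add h_test h_η,
    ← intervalIntegral.integral_const_mul,
    ← intervalIntegral.integral_add h_v ((h_test.add h_η).const_mul p)]
  refine intervalIntegral.integral_mono_on hab ((hη.mul (h_rpow p)).intervalIntegrable a b)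
    (h_v.add ((h_test.add h_η).const_mul p)) fun x _ => ?_
  rw [real_inner_smul_right]
  linarith [mul_le_mul_of_nonneg_left (regNorm_rpow_le hε hp1 hp2 (q x) (v x)) (hη0 x)]

theorem sq_mul_integral_regPotential_mul_le (hab : a ≤ b) (hε : 0 < ε) (hp1 : 1 ≤ p) (hp2 : p ≤ 2)
    (hq : Continuous q) (hθ : Continuous θ) (hK : ∀ x, |θ x| ≤ K) :
    ε ^ 2 * ∫ x in a..b, regPotential p (regNorm ε (q x)) * θ x
      ≤ K * (ε ^ 2 * (∫ x in a..b, regNorm ε (q x) ^ p) + ε ^ (p - 1) * (b - a)) := by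
  have h_rpow : Continuous fun x => regNorm ε (q x) ^ p := (continuous_regNorm_rpow hε p).comp hq
  have h_pot : Continuous fun x => regPotential p (regNorm ε (q x)) :=
    (continuous_regPotential_regNorm hε p).comp hq
  have h_majorant : K * (ε ^ 2 * (∫ x in a..b, regNorm ε (q x) ^ p) + ε ^ (p - 1) * (b - a))
      = ∫ x in a..b, K * (ε ^ 2 * regNorm ε (q x) ^ p + ε ^ (p - 1)) := by
    rw [intervalIntegral.integral_const_mul, intervalIntegral.integral_add
      ((h_rpow.intervalIntegrable a b).const_mul _) intervalIntegrable_const,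
      intervalIntegral.integral_const_mul, intervalIntegral.integral_const, smul_eq_mul,
      mul_comm (b - a)]
  rw [h_majorant, ← intervalIntegral.integral_const_mul]
  refine intervalIntegral.integral_mono_on hab
    (Continuous.intervalIntegrable (by fun_prop) a b)
    (Continuous.intervalIntegrable (by fun_prop) a b) fun x _ => ?_
  have := abs_nonneg (θ x)
  calc ε ^ 2 * (regPotential p (regNorm ε (q x)) * θ x)
      = θ x * (ε ^ 2 * regPotential p (regNorm ε (q x))) := by ring
    _ ≤ |θ x| * |ε ^ 2 * regPotential p (regNorm ε (q x))| :=
        (le_abs_self _).trans_eq (abs_mul _ _)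
    _ ≤ K * (ε ^ 2 * regNorm ε (q x) ^ p + ε ^ (p - 1)) := by
        gcongr
        · exact (abs_nonneg _).trans (hK x)
        · exact hK x
        · exact abs_sq_mul_regPotential_le hε (le_regNorm ε _) hp1 hp2

end FixedEps

namespace IsMinimizerEps

variable {n : ℕ} {a b lam ε p K : ℝ} {f f' u u' : ℝ → EuclideanSpace ℝ (Fin n)} {η : ℝ → ℝ}

theorem intervalIntegrable_regNorm_rpow (hab : a ≤ b) (hε : 0 < ε) (hf : ContinuousOn f (Icc a b))
    (h : IsMinimizerEps lam ε a b f u u') (p : ℝ) :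
    IntervalIntegrable (fun x => regNorm ε (u' x) ^ p) volume a b := by
  obtain ⟨q, hq, -, -, h_ae, -⟩ := h.exists_contDiff_ae_eq_deriv hab hε hf
  have h_q : IntervalIntegrable (fun x => regNorm ε (q x) ^ p) volume a b :=
    ((continuous_regNorm_rpow hε p).comp hq.continuous).intervalIntegrable a b
  rw [intervalIntegrable_iff_integrableOn_Ioo_of_le hab] at h_q ⊢
  exact h_q.congr (h_ae.mono fun x hx => by simp only [hx])

theorem integral_mul_regNorm_rpow_le (hab : a ≤ b) (hlam : 0 < lam) (hε : 0 < ε) (hp1 : 1 < p)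
    (hp2 : p ≤ 2) (hf : IsPrimitiveOn a b f f') (hf' : MemLp f' 2 (volume.restrict (Ioo a b)))
    (h : IsMinimizerEps lam ε a b f u u') (hη : ContDiff ℝ 2 η) (hη0 : ∀ x, 0 ≤ η x)
    (hηa : deriv η a = 0) (hηb : deriv η b = 0) (hK : ∀ x, |deriv (deriv η) x| ≤ K) :
    ∫ x in a..b, η x * regNorm ε (u' x) ^ p ≤ (∫ x in a..b, η x * ‖f' x‖ ^ p)
      + p * (lam * (K * (ε ^ 2 * (∫ x in a..b, regNorm ε (u' x) ^ p) + ε ^ (p - 1) * (b - a)))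
        + ε ^ p * ∫ x in a..b, η x) := by
  obtain ⟨q, hq, hqa, hqb, h_ae, hqg⟩ := h.exists_contDiff_ae_eq_deriv hab hε hf.continuousOn
  have integral_congr_q (F : ℝ → EuclideanSpace ℝ (Fin n) → ℝ) :
      ∫ x in a..b, F x (u' x) = ∫ x in a..b, F x (q x) := by
    rw [← integral_Ioo_eq_intervalIntegral hab, ← integral_Ioo_eq_intervalIntegral hab]
    exact integral_congr_ae (h_ae.mono fun x hx => by simp only [hx])
  have h_weighted := integral_inner_mul_regNorm_rpow_smul_le hab hε hp1.le (by linarith)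
    (((h.isPrimitiveOn hab hε hf.continuousOn).sub hf).const_smul (1 / lam))
    (((h.memLp_two hab hε hf.continuousOn).sub hf').const_smul (1 / lam))
    hq hqa hqb hqg hη hη0 hηa hηb
  simp only [real_inner_smul_left] at h_weighted
  rw [intervalIntegral.integral_const_mul, one_div, inv_mul_le_iff₀ hlam,
    integral_congr_q fun x v => inner ℝ (v - f' x) ((η x * regNorm ε (q x) ^ (p - 2)) • q x)]
    at h_weighted
  rw [integral_congr_q fun x v => η x * regNorm ε v ^ p,
    integral_congr_q fun _ v => regNorm ε v ^ p]
  refine (integral_mul_regNorm_rpow_le_add_inner hab hε hp1 hp2 hq.continuous hf' hη.continuous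
    hη0).trans ?_
  gcongr
  exact h_weighted.trans <| mul_le_mul_of_nonneg_left
    (sq_mul_integral_regPotential_mul_le hab hε hp1.le hp2 hq.continuous
      (hη.iterate_deriv' 0 2).continuous hK) hlam.le

theorem integral_regNorm_rpow_le (hab : a ≤ b) (hlam : 0 < lam) (hε : 0 < ε) (hp1 : 1 < p)
    (hp2 : p ≤ 2) (hf : IsPrimitiveOn a b f f') (hf' : MemLp f' 2 (volume.restrict (Ioo a b)))
    (h : IsMinimizerEps lam ε a b f u u') :
    ∫ x in a..b, regNorm ε (u' x) ^ p
      ≤ (∫ x in a..b, ‖f' x‖ ^ p) + p * (ε ^ p * (b - a)) := by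
  simpa using h.integral_mul_regNorm_rpow_le hab hlam hε hp1 hp2 hf hf' (η := fun _ => 1) (K := 0)
    contDiff_const (fun _ => zero_le_one) (by simp) (by simp) (by simp)

end IsMinimizerEps

section Cutoff

variable {a b c : ℝ} {h : ℝ → ℝ} (η : ContDiffBump c)

theorem integral_ball_le_integral_bump_mul (hball : Icc (c - η.rOut) (c + η.rOut) ⊆ Icc a b)
    (h0 : ∀ x, 0 ≤ h x) (h_int : IntervalIntegrable h volume a b) :
    ∫ x in (c - η.rIn)..(c + η.rIn), h x ≤ ∫ x in a..b, η x * h x := by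
  have hr := η.rIn_pos
  have hrR := η.rIn_lt_rOut
  obtain ⟨ha, hb⟩ := (Icc_subset_Icc_iff (by linarith)).1 hball
  have eq_one {x : ℝ} (hx : x ∈ uIcc (c - η.rIn) (c + η.rIn)) : η x = 1 :=
    η.one_of_mem_closedBall (by rwa [Real.closedBall_eq_Icc, ← uIcc_of_le (by linarith)])
  calc ∫ x in (c - η.rIn)..(c + η.rIn), h x
      = ∫ x in (c - η.rIn)..(c + η.rIn), η x * h x :=
        intervalIntegral.integral_congr fun x hx => by rw [eq_one hx, one_mul]
    _ ≤ ∫ x in a..b, η x * h x :=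
        intervalIntegral.integral_mono_interval (by linarith) (by linarith) (by linarith)
          (.of_forall fun x => mul_nonneg η.nonneg (h0 x))
          (h_int.continuousOn_mul η.continuous.continuousOn)

theorem integral_bump_mul_le_integral_ball (hball : Icc (c - η.rOut) (c + η.rOut) ⊆ Icc a b)
    (h0 : ∀ x, 0 ≤ h x) (h_int : IntervalIntegrable h volume a b) :
    ∫ x in a..b, η x * h x ≤ ∫ x in (c - η.rOut)..(c + η.rOut), h x := by
  have hR := η.rOut_pos
  obtain ⟨ha, hb⟩ := (Icc_subset_Icc_iff (by linarith)).1 hball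
  have support_subset : Function.support (fun x => η x * h x)
      ⊆ Ioc (c - η.rOut) (c + η.rOut) :=
    (Function.support_mul_subset_left _ _).trans <| by
      rw [η.support_eq, Real.ball_eq_Ioo]
      exact Ioo_subset_Ioc_self
  have h_ball : IntervalIntegrable h volume (c - η.rOut) (c + η.rOut) :=
    h_int.mono_set (by rwa [uIcc_of_le (by linarith), uIcc_of_le (by linarith)])
  calc ∫ x in a..b, η x * h x
      = ∫ x in (c - η.rOut)..(c + η.rOut), η x * h x := by
        rw [intervalIntegral.integral_eq_integral_of_support_subset support_subset,
          intervalIntegral.integral_eq_integral_of_support_subset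
            (support_subset.trans (Ioc_subset_Ioc ha hb))]
    _ ≤ ∫ x in (c - η.rOut)..(c + η.rOut), h x :=
        intervalIntegral.integral_mono_on (by linarith)
          (h_ball.continuousOn_mul η.continuous.continuousOn) h_ball
          fun x _ => mul_le_of_le_one_left (h0 x) η.le_one

theorem deriv_bump_eq_zero {x : ℝ} (hx : x ∉ Icc (c - η.rOut) (c + η.rOut)) : deriv η x = 0 := by
  rw [← Real.closedBall_eq_Icc, ← η.tsupport_eq] at hx
  exact Function.notMem_support.1 fun h => hx (support_deriv_subset h)

theorem exists_abs_deriv_deriv_bump_le : ∃ K, ∀ x, |deriv (deriv η) x| ≤ K :=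
  η.hasCompactSupport.deriv.deriv.exists_bound_of_continuous
    ((η.contDiff (n := 2)).iterate_deriv' 0 2).continuous

theorem integral_bump_le (hab : a ≤ b) : ∫ x in a..b, η x ≤ b - a := by
  simpa using intervalIntegral.integral_mono_on (μ := volume) (g := fun _ => 1) hab
    (η.continuous.intervalIntegrable a b) intervalIntegrable_const fun x _ => η.le_one

end Cutoff

section Limsup

variable {n : ℕ} {a b lam ε p r R x₀ : ℝ} {f f' : ℝ → EuclideanSpace ℝ (Fin n)}

/-- The error in the local gradient estimate at parameter `ε`: `K` bounds the second derivative of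
the cutoff, `A` is the integral of `‖f'‖ ^ p` over the whole interval and `L` its length. -/
def gradientRemainder (p lam K A L ε : ℝ) : ℝ :=
  p * (lam * (K * (ε ^ 2 * (A + p * (ε ^ p * L)) + ε ^ (p - 1) * L)) + ε ^ p * L)

theorem tendsto_gradientRemainder (hp : 1 < p) (lam K A L : ℝ) :
    Tendsto (gradientRemainder p lam K A L) (nhds 0) (nhds 0) := by
  unfold gradientRemainder
  have h_p : Continuous fun ε : ℝ => ε ^ p := Real.continuous_rpow_const (by linarith)
  have h_sub : Continuous fun ε : ℝ => ε ^ (p - 1) := Real.continuous_rpow_const (by linarith)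
  refine Continuous.tendsto' (by fun_prop) _ _ ?_
  simp [Real.zero_rpow (sub_pos.2 hp).ne', Real.zero_rpow (zero_lt_one.trans hp).ne']

theorem IsMinimizerEps.integral_ball_regNorm_rpow_le {u u' : ℝ → EuclideanSpace ℝ (Fin n)}
    (hlam : 0 < lam) (hε : 0 < ε) (hp1 : 1 < p) (hp2 : p ≤ 2) (hf : IsPrimitiveOn a b f f')
    (hf' : MemLp f' 2 (volume.restrict (Ioo a b))) (h : IsMinimizerEps lam ε a b f u u')
    (η : ContDiffBump x₀) (hball : Icc (x₀ - η.rOut) (x₀ + η.rOut) ⊆ Ioo a b) {K : ℝ}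
    (hK : ∀ x, |deriv (deriv η) x| ≤ K) :
    ∫ x in (x₀ - η.rIn)..(x₀ + η.rIn), regNorm ε (u' x) ^ p
      ≤ (∫ x in (x₀ - η.rOut)..(x₀ + η.rOut), ‖f' x‖ ^ p)
        + gradientRemainder p lam K (∫ x in a..b, ‖f' x‖ ^ p) (b - a) ε := by
  have hab : a ≤ b := by
    have hR := η.rOut_pos
    obtain ⟨h1, h2⟩ := hball (left_mem_Icc.2 (by linarith))
    linarith
  have hball' := hball.trans Ioo_subset_Icc_self
  have hK0 : 0 ≤ K := (abs_nonneg _).trans (hK 0)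
  have h_left := integral_ball_le_integral_bump_mul η hball'
    (fun x => Real.rpow_nonneg (regNorm_nonneg ε (u' x)) p)
    (h.intervalIntegrable_regNorm_rpow hab hε hf.continuousOn p)
  have h_right := integral_bump_mul_le_integral_ball η hball'
    (fun x => Real.rpow_nonneg (norm_nonneg (f' x)) p)
    ((intervalIntegrable_iff_integrableOn_Ioo_of_le hab).2
      (integrable_norm_rpow_of_memLp_two (by linarith) hp2 hf'))
  have h_weighted := h.integral_mul_regNorm_rpow_le hab hlam hε hp1 hp2 hf hf' η.contDiff
    (fun _ => η.nonneg) (deriv_bump_eq_zero η fun ha => (hball ha).1.false)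
    (deriv_bump_eq_zero η fun hb => (hball hb).2.false) hK
  refine (h_left.trans h_weighted).trans ?_
  unfold gradientRemainder
  gcongr
  · exact h.integral_regNorm_rpow_le hab hlam hε hp1 hp2 hf hf'
  · exact integral_bump_le η hab

theorem limsup_integral_ball_regNorm_rpow_le {u u' : ℝ → ℝ → EuclideanSpace ℝ (Fin n)}
    (hlam : 0 < lam) (hp1 : 1 < p) (hp2 : p ≤ 2) (hf : IsPrimitiveOn a b f f')
    (hf' : MemLp f' 2 (volume.restrict (Ioo a b)))
    (hu : ∀ ε, 0 < ε → IsMinimizerEps lam ε a b f (u ε) (u' ε)) (hr : 0 < r) (hrR : r < R)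
    (hball : Icc (x₀ - R) (x₀ + R) ⊆ Ioo a b) :
    limsup (fun ε => ∫ x in (x₀ - r)..(x₀ + r), regNorm ε (u' ε x) ^ p) (nhdsWithin 0 (Ioi 0))
      ≤ ∫ x in (x₀ - R)..(x₀ + R), ‖f' x‖ ^ p := by
  let η : ContDiffBump x₀ := ⟨r, R, hr, hrR⟩
  obtain ⟨K, hK⟩ := exists_abs_deriv_deriv_bump_le η
  have h_le := (eventually_mem_nhdsWithin (a := 0)).mono fun ε (hε : ε ∈ Ioi (0 : ℝ)) =>
    (hu ε hε).integral_ball_regNorm_rpow_le hlam hε hp1 hp2 hf hf' η hball hK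
  have h_remainder := (tendsto_gradientRemainder hp1 lam K (∫ x in a..b, ‖f' x‖ ^ p)
    (b - a)).mono_left (nhdsWithin_le_nhds (s := Ioi 0))
  have h_lim := h_remainder.const_add (∫ x in (x₀ - R)..(x₀ + R), ‖f' x‖ ^ p)
  rw [add_zero] at h_lim
  rw [← h_lim.limsup_eq]
  have h_bdd_below : IsBoundedUnder (· ≥ ·) (nhdsWithin 0 (Ioi 0)) fun ε =>
      ∫ x in (x₀ - r)..(x₀ + r), regNorm ε (u' ε x) ^ p :=
    isBoundedUnder_of ⟨0, fun ε => intervalIntegral.integral_nonneg (by linarith)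
      fun x _ => Real.rpow_nonneg (regNorm_nonneg ε _) p⟩
  exact limsup_le_limsup h_le h_bdd_below.isCoboundedUnder_le h_lim.isBoundedUnder_le

end Limsup

/-- `limsup_{ε → 0⁺} ∫_{B_r(x₀)} |u_ε'|_ε^p ≤ ∫_{B_R(x₀)} ‖f'‖^p` for the
family of minimizers `u_ε` of `E_ε`, where `p ∈ (1,2]` and `B_r(x₀) ⊆ B_R(x₀) ⊆ I`. -/
theorem minimizerEps_limsup_local_gradient_estimate
    {n : ℕ} (hn : 1 ≤ n) (a b : ℝ) (hab : a < b) (lam : ℝ) (hlam : 0 < lam)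
    (f f' : ℝ → EuclideanSpace ℝ (Fin n)) (hf : InH1 a b f f')
    (u u' : ℝ → ℝ → EuclideanSpace ℝ (Fin n))
    (hu : ∀ ε : ℝ, 0 < ε → IsMinimizerEps lam ε a b f (u ε) (u' ε))
    (p : ℝ) (hp1 : 1 < p) (hp2 : p ≤ 2)
    (x₀ : ℝ) (hx₀ : x₀ ∈ Set.Ioo a b) (r R : ℝ) (hr : 0 < r) (hrR : r < R)
    (hBR : Set.Icc (x₀ - R) (x₀ + R) ⊆ Set.Ioo a b) :
    Filter.limsup
        (fun ε : ℝ => ∫ x in (x₀ - r)..(x₀ + r), Real.sqrt (‖u' ε x‖ ^ 2 + ε ^ 2) ^ p)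
        (nhdsWithin 0 (Set.Ioi 0))
      ≤ ∫ x in (x₀ - R)..(x₀ + R), ‖f' x‖ ^ p := by
  rcases hf.isPrimitiveOn_or_isPrimitiveOn_zero hab.le with hf_prim | hf_zero
  · exact limsup_integral_ball_regNorm_rpow_le hlam hp1 hp2 hf_prim (hf.memLp_two hab.le hf_prim)
      hu hr hrR hBR
  · refine (limsup_integral_ball_regNorm_rpow_le hlam hp1 hp2 hf_zero MemLp.zero' hu hr hrR
      hBR).trans ?_
    simp only [norm_zero, Real.zero_rpow (by linarith : p ≠ 0),
      intervalIntegral.integral_zero]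
    exact intervalIntegral.integral_nonneg (by linarith) fun x _ => by positivity
end
end

section
/- Suppose f ∈ H¹(I,ℝⁿ) with derivative f', and let u be a minimizer of the energy E. Then for every x₀ ∈ I and r > 0 with [x₀ − r, x₀ + r] ⊆ I, the total variation of u over the closed ball satisfies eVariationOn u (Set.Icc (x₀ − r) (x₀ + r)) ≤ ∫_{x₀−r}^{x₀+r} ‖f'‖, possibly after modifying u on a set of measure zero. -/
open MeasureTheory Set Filter
open scoped ENNReal

noncomputable section

/-- The Rudin–Osher–Fatemi energy with fidelity weight `1/(2 lam)`, datum `f`,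
on the interval `I = Ioo a b`. -/
def rofEnergy {n : ℕ} (lam a b : ℝ) (f w : ℝ → EuclideanSpace ℝ (Fin n)) : ℝ≥0∞ :=
  eVariationOn w (Set.Ioo a b) +
    ENNReal.ofReal ((1 / (2 * lam)) * ∫ x in Set.Ioo a b, ‖w x - f x‖ ^ 2)

/-- `u` is a minimizer of the ROF energy among Borel measurable functions
square-integrable on `Ioo a b`. -/
def IsMinimizer {n : ℕ} (lam a b : ℝ) (f u : ℝ → EuclideanSpace ℝ (Fin n)) : Prop :=
  Measurable u ∧ SqIntOn u (Set.Ioo a b) ∧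
    ∀ w : ℝ → EuclideanSpace ℝ (Fin n), Measurable w → SqIntOn w (Set.Ioo a b) →
      rofEnergy lam a b f u ≤ rofEnergy lam a b f w

/-!
Write `g = u - f` and `P x = ∫ s in x..b, g s`. Comparing `u` with `u` plus a step function gives
`‖P‖ ≤ lam`; comparing it with the function that stays constant on `[x, y]` and has the increments
of `u` elsewhere gives `lam |Du| ≤ -⟪P, Du⟫` on `[x, y]`. Hence `u` is locally constant where
`‖P‖ < lam`, while `‖P‖ ^ 2` is maximal where `‖P‖ = lam`, which makes its derivative `-2⟪P, g⟫`
vanish there. One-sided versions of this fact rule out jumps of `u` when `f` is continuous.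

If `⟪P, g⟫` vanishes at `p < q`, an integration by parts turns the bound for `Du` on `[p, q]` into
`lam ‖u q - u p‖ ≤ -⟪P q, f q - f p⟫ - ∫ s in p..q, ⟪g s, g s + (f s - f p)⟫`, whose right-hand side
is at most `lam ‖f q - f p‖ + (1 / 4) ∫ s in p..q, ‖f s - f p‖ ^ 2`. The last integral is
`o(q - p)`, uniformly, so it disappears when an interval is cut into short pieces.
-/

open Topology
open scoped RealInnerProductSpace

section TotalVariation

variable {α E F : Type*} [LinearOrder α]

lemma eVariationOn_le_of_edist_le [PseudoEMetricSpace E] [PseudoEMetricSpace F]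
    {u : α → E} {f : α → F} {s : Set α}
    (h : ∀ x ∈ s, ∀ y ∈ s, x ≤ y → edist (u x) (u y) ≤ eVariationOn f (s ∩ Icc x y)) :
    eVariationOn u s ≤ eVariationOn f s := by
  refine iSup_le fun ⟨n, x, hx, hxs⟩ => ?_
  calc ∑ i ∈ Finset.range n, edist (u (x (i + 1))) (u (x i))
      ≤ ∑ i ∈ Finset.range n, eVariationOn f (s ∩ Icc (x i) (x (i + 1))) :=
        Finset.sum_le_sum fun i _ => by
          rw [edist_comm]
          exact h _ (hxs _) _ (hxs _) (hx i.le_succ)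
    _ = eVariationOn f (s ∩ Icc (x 0) (x n)) := eVariationOn.sum f hx fun i _ _ => hxs i
    _ ≤ eVariationOn f s := eVariationOn.mono f inter_subset_left

lemma edist_add_edist_le_eVariationOn_Icc [PseudoEMetricSpace E] (u : α → E) {x p y : α}
    (hxp : x ≤ p) (hpy : p ≤ y) :
    edist (u p) (u x) + edist (u y) (u p) ≤ eVariationOn u (Icc x y) := by
  have hsplit := eVariationOn.Icc_add_Icc u (s := univ) hxp hpy (mem_univ p)
  simp only [univ_inter] at hsplit
  rw [← hsplit]
  exact add_le_add (eVariationOn.edist_le u (right_mem_Icc.2 hxp) (left_mem_Icc.2 hxp))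
    (eVariationOn.edist_le u (right_mem_Icc.2 hpy) (left_mem_Icc.2 hpy))

lemma eVariationOn_eq_Iic_add_Icc_add_Ici [PseudoEMetricSpace E] (u : α → E) {s : Set α} {x y : α}
    (hx : x ∈ s) (hy : y ∈ s) (hxy : x ≤ y) :
    eVariationOn u s
      = eVariationOn u (s ∩ Iic x) + eVariationOn u (s ∩ Icc x y) + eVariationOn u (s ∩ Ici y) := by
  have hunion : s = (s ∩ Iic x ∪ s ∩ Icc x y) ∪ s ∩ Ici y := by
    ext t
    grind
  conv_lhs => rw [hunion]
  rw [eVariationOn.union u (x := y) ⟨by grind, by grind [mem_upperBounds]⟩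
      ⟨by grind, fun t ht => ht.2⟩,
    eVariationOn.union u (x := x) ⟨by grind, fun t ht => ht.2⟩ ⟨by grind, fun t ht => ht.2.1⟩]

variable [NormedAddCommGroup E]

lemma eVariationOn_add_le (u w : α → E) (s : Set α) :
    eVariationOn (fun x => u x + w x) s ≤ eVariationOn u s + eVariationOn w s := by
  refine iSup_le fun ⟨n, x, hx, hxs⟩ => ?_
  calc ∑ i ∈ Finset.range n, edist (u (x (i + 1)) + w (x (i + 1))) (u (x i) + w (x i))
      ≤ ∑ i ∈ Finset.range n,
          (edist (u (x (i + 1))) (u (x i)) + edist (w (x (i + 1))) (w (x i))) :=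
        Finset.sum_le_sum fun i _ => edist_add_add_le _ _ _ _
    _ ≤ eVariationOn u s + eVariationOn w s := by
        rw [Finset.sum_add_distrib]
        exact add_le_add (eVariationOn.sum_le hx hxs) (eVariationOn.sum_le hx hxs)

lemma eVariationOn_const_sub (c : E) (u : α → E) (s : Set α) :
    eVariationOn (fun x => c - u x) s = eVariationOn u s := by
  simp only [eVariationOn, edist_sub_left]

lemma eVariationOn_const_smul_le [NormedSpace ℝ E] (r : ℝ) (u : α → E) (s : Set α) :
    eVariationOn (fun x => r • u x) s ≤ ‖r‖ₑ * eVariationOn u s :=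
  (lipschitzWith_smul r).lipschitzOnWith.comp_eVariationOn_le (mapsTo_univ u s)

lemma eVariationOn_add_smul_le [NormedSpace ℝ E] (u h : α → E) (s : Set α) {t : ℝ}
    (ht₀ : 0 ≤ t) (ht₁ : t ≤ 1) :
    eVariationOn (fun x => u x + t • h x) s
      ≤ ENNReal.ofReal (1 - t) * eVariationOn u s
        + ENNReal.ofReal t * eVariationOn (fun x => u x + h x) s := by
  calc eVariationOn (fun x => u x + t • h x) s
      = eVariationOn (fun x => (1 - t) • u x + t • (u x + h x)) s := by
        congr 1
        funext x
        module
    _ ≤ ‖1 - t‖ₑ * eVariationOn u s + ‖t‖ₑ * eVariationOn (fun x => u x + h x) s :=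
        (eVariationOn_add_le _ _ s).trans
          (add_le_add (eVariationOn_const_smul_le _ _ s) (eVariationOn_const_smul_le _ _ s))
    _ = _ := by rw [Real.enorm_of_nonneg (sub_nonneg.2 ht₁), Real.enorm_of_nonneg ht₀]

lemma eVariationOn_indicator_Ici_const_le (s : Set α) (x : α) (e : E) :
    eVariationOn ((Ici x).indicator fun _ => e) s ≤ ‖e‖ₑ := by
  have hmono : MonotoneOn (fun t => decide (x ≤ t)) s := fun t _ t' _ htt' => by
    simp only [Bool.le_iff_imp, decide_eq_true_eq]
    exact fun h => h.trans htt'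
  have hcomp : (Ici x).indicator (fun _ => e)
      = (fun c : Bool => if c then e else 0) ∘ fun t => decide (x ≤ t) := by
    funext t
    simp [indicator_apply]
  calc eVariationOn ((Ici x).indicator fun _ => e) s
      ≤ eVariationOn (fun c : Bool => if c then e else 0) {false, true} := by
        rw [hcomp]
        exact eVariationOn.comp_le_of_monotoneOn _ _ hmono fun t _ => by
          cases decide (x ≤ t) <;> simp
    _ = ‖e‖ₑ := by
        rw [eVariationOn.pair]
        simp [edist_eq_enorm_sub]

lemma eVariationOn_sub_comp_clamp_add_le (u : α → E) {s : Set α} {x y : α} (hx : x ∈ s) (hy : y ∈ s)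
    (hxy : x ≤ y) :
    eVariationOn (fun t => u t + (u x - u (max x (min y t)))) s + eVariationOn u (s ∩ Icc x y)
      ≤ eVariationOn u s := by
  set w : α → E := fun t => u t + (u x - u (max x (min y t)))
  have hleft : EqOn w u (s ∩ Iic x) := fun t ht => by
    have : max x (min y t) = x := max_eq_left ((min_le_right y t).trans ht.2)
    simp [w, this]
  have hmid : eVariationOn w (s ∩ Icc x y) = 0 := by
    refine eVariationOn.constant_on ?_
    rintro _ ⟨t, ht, rfl⟩ _ ⟨t', ht', rfl⟩
    simp [w, ht.2.1, ht.2.2, ht'.2.1, ht'.2.2]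
  have hright : eVariationOn w (s ∩ Ici y) ≤ eVariationOn u (s ∩ Ici y) := by
    have heq : EqOn w ((fun e => e + (u x - u y)) ∘ u) (s ∩ Ici y) := fun t ht => by
      simp [w, min_eq_left ht.2, hxy]
    rw [eVariationOn.congr heq]
    simp only [eVariationOn, Function.comp_apply, edist_add_right, le_refl]
  rw [eVariationOn_eq_Iic_add_Icc_add_Ici w hx hy hxy,
    eVariationOn_eq_Iic_add_Icc_add_Ici u hx hy hxy, eVariationOn.congr hleft, hmid, add_zero,
    add_right_comm]
  gcongr

end TotalVariation

section InnerIntegral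

variable {E : Type*} [NormedAddCommGroup E] [InnerProductSpace ℝ E] [CompleteSpace E]

lemma intervalIntegral_const_inner {g : ℝ → E} {x y : ℝ} (hg : IntervalIntegrable g volume x y)
    (c : E) : ∫ s in x..y, ⟪c, g s⟫ = ⟪c, ∫ s in x..y, g s⟫ :=
  (innerSL ℝ c).intervalIntegral_comp_comm hg

lemma intervalIntegral_inner_sub_comp_clamp {g u : ℝ → E} {a b x y : ℝ}
    (hg : IntervalIntegrable g volume a b)
    (hgu : IntervalIntegrable (fun s => ⟪g s, u x - u (max x (min y s))⟫) volume a b)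
    (hax : a ≤ x) (hxy : x ≤ y) (hyb : y ≤ b) :
    ∫ s in a..b, ⟪g s, u x - u (max x (min y s))⟫
      = -(∫ s in x..y, ⟪g s, u s - u x⟫) - ⟪∫ s in y..b, g s, u y - u x⟫ := by
  have hleft : ∫ s in a..x, ⟪g s, u x - u (max x (min y s))⟫ = 0 := by
    rw [← intervalIntegral.integral_zero (a := a) (b := x)]
    refine intervalIntegral.integral_congr fun s hs => ?_
    rw [uIcc_of_le hax] at hs
    simp [max_eq_left ((min_le_right y s).trans hs.2)]
  have hmid : ∫ s in x..y, ⟪g s, u x - u (max x (min y s))⟫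
      = -∫ s in x..y, ⟪g s, u s - u x⟫ := by
    rw [← intervalIntegral.integral_neg]
    refine intervalIntegral.integral_congr fun s hs => ?_
    rw [uIcc_of_le hxy] at hs
    simp [hs.1, hs.2, ← inner_neg_right]
  have hright : ∫ s in y..b, ⟪g s, u x - u (max x (min y s))⟫
      = -⟪∫ s in y..b, g s, u y - u x⟫ := by
    rw [real_inner_comm, ← inner_neg_left, neg_sub,
      ← intervalIntegral_const_inner (hg.mono_set (uIcc_subset_uIcc_right (by grind [mem_uIcc])))]
    refine intervalIntegral.integral_congr fun s hs => ?_
    rw [uIcc_of_le hyb] at hs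
    simp [hs.1, hxy, real_inner_comm]
  rw [← intervalIntegral.integral_add_adjacent_intervals (b := y),
    ← intervalIntegral.integral_add_adjacent_intervals (b := x), hleft, hmid, hright]
  · ring
  all_goals exact hgu.mono_set (by grind [uIcc_of_le])

end InnerIntegral

section Calibration

variable {E : Type*} [NormedAddCommGroup E] [InnerProductSpace ℝ E]

/-- The integral of the residual `u - f` from `x` to the right endpoint `b`. Divided by `lam`, it is
the dual variable (the calibrating field) of the Rudin–Osher–Fatemi problem. -/
def residualPotential (b : ℝ) (f u : ℝ → E) (x : ℝ) : E :=
  ∫ s in x..b, (u s - f s)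

/-- First-order optimality conditions for the Rudin–Osher–Fatemi energy with datum `f` on
`Ioo a b`: the residual potential `P` has norm at most `lam`, and `lam |Du| = -⟪P, Du⟫` as measures.
The second condition is stated on compact subintervals after an integration by parts, which removes
the measure `Du`. -/
structure IsCalibrated (lam a b : ℝ) (f u : ℝ → E) : Prop where
  boundedVariationOn : BoundedVariationOn u (Ioo a b)
  intervalIntegrable : IntervalIntegrable (fun s => u s - f s) volume a b
  norm_le : ∀ x ∈ Ioo a b, ‖residualPotential b f u x‖ ≤ lam
  variation_le : ∀ x ∈ Ioo a b, ∀ y ∈ Ioo a b, x ≤ y →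
    lam * (eVariationOn u (Icc x y)).toReal
      ≤ -⟪residualPotential b f u y, u y - u x⟫ - ∫ s in x..y, ⟪u s - f s, u s - u x⟫

end Calibration

section SquareIntegrable

variable {α E : Type*} [MeasurableSpace α] {μ : Measure α} [NormedAddCommGroup E]
  [InnerProductSpace ℝ E]

lemma integrable_inner_of_memLp_two_s12 {g h : α → E} (hg : MemLp g 2 μ) (hh : MemLp h 2 μ) :
    Integrable (fun x => ⟪g x, h x⟫) μ :=
  (hg.norm.integrable_mul hh.norm).mono' (hg.1.inner hh.1)
    (Eventually.of_forall fun x => norm_inner_le_norm (g x) (h x))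

lemma integral_norm_add_smul_sq {g h : α → E} (hg : MemLp g 2 μ) (hh : MemLp h 2 μ) (t : ℝ) :
    ∫ x, ‖g x + t • h x‖ ^ 2 ∂μ
      = ∫ x, ‖g x‖ ^ 2 ∂μ + 2 * t * ∫ x, ⟪g x, h x⟫ ∂μ + t ^ 2 * ∫ x, ‖h x‖ ^ 2 ∂μ := by
  have hgg := (memLp_two_iff_integrable_sq_norm hg.1).1 hg
  have hhh := ((memLp_two_iff_integrable_sq_norm hh.1).1 hh).const_mul (t ^ 2)
  have hgh := (integrable_inner_of_memLp_two_s12 hg hh).const_mul (2 * t)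
  calc ∫ x, ‖g x + t • h x‖ ^ 2 ∂μ
      = ∫ x, (‖g x‖ ^ 2 + 2 * t * ⟪g x, h x⟫ + t ^ 2 * ‖h x‖ ^ 2) ∂μ := by
        congr 1
        funext x
        rw [norm_add_sq_real, real_inner_smul_right, norm_smul, mul_pow, Real.norm_eq_abs, sq_abs]
        ring
    _ = _ := by
        rw [integral_add (by exact hgg.add hgh) hhh, integral_add hgg hgh, integral_const_mul,
          integral_const_mul]

end SquareIntegrable

lemma le_of_forall_le_add_mul {A B C : ℝ} (h : ∀ t, 0 < t → t ≤ 1 → A ≤ B + t * C) : A ≤ B := by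
  have hlim : Tendsto (fun t => B + t * C) (𝓝[>] 0) (𝓝 (B + 0 * C)) :=
    ((continuous_id.mul continuous_const).const_add B).continuousWithinAt
  rw [zero_mul, add_zero] at hlim
  refine ge_of_tendsto hlim ?_
  filter_upwards [Ioc_mem_nhdsGT one_pos] with t ht using h t ht.1 ht.2

lemma memLp_of_boundedVariationOn_Ioo {E : Type*} [NormedAddCommGroup E] [MeasurableSpace E]
    [BorelSpace E] [SecondCountableTopology E] {w : ℝ → E} {a b : ℝ} (hw : Measurable w)
    (hbv : BoundedVariationOn w (Ioo a b)) (p : ℝ≥0∞) :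
    MemLp w p (volume.restrict (Ioo a b)) := by
  rcases (Ioo a b).eq_empty_or_nonempty with hempty | ⟨x, hx⟩
  · simp [hempty]
  refine MemLp.of_bound hw.aestronglyMeasurable (‖w x‖ + (eVariationOn w (Ioo a b)).toReal) ?_
  filter_upwards [ae_restrict_mem measurableSet_Ioo] with y hy
  have := hbv.dist_le hy hx
  rw [dist_eq_norm] at this
  linarith [norm_le_norm_add_norm_sub' (w y) (w x)]

section Minimizer

variable {n : ℕ} {a b lam : ℝ} {f u : ℝ → EuclideanSpace ℝ (Fin n)}

lemma SqIntOn.memLp_two {S : Set ℝ} (hu : SqIntOn u S)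
    (hm : AEStronglyMeasurable u (volume.restrict S)) : MemLp u 2 (volume.restrict S) :=
  (memLp_two_iff_integrable_sq_norm hm).2 hu

lemma sqIntOn_of_memLp_two {S : Set ℝ} (hu : MemLp u 2 (volume.restrict S)) : SqIntOn u S :=
  (memLp_two_iff_integrable_sq_norm hu.1).1 hu

lemma IsMinimizer.memLp_two (hu : IsMinimizer lam a b f u) :
    MemLp u 2 (volume.restrict (Ioo a b)) :=
  hu.2.1.memLp_two hu.1.aestronglyMeasurable

lemma IsMinimizer.boundedVariationOn (hu : IsMinimizer lam a b f u) :
    BoundedVariationOn u (Ioo a b) := by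
  have hle : rofEnergy lam a b f u ≤ rofEnergy lam a b f 0 :=
    hu.2.2 0 measurable_zero (by simp [SqIntOn])
  have hzero : eVariationOn (0 : ℝ → EuclideanSpace ℝ (Fin n)) (Ioo a b) = 0 :=
    eVariationOn.constant_on (by rintro _ ⟨_, _, rfl⟩ _ ⟨_, _, rfl⟩; rfl)
  refine ne_top_of_le_ne_top ?_ (le_self_add.trans hle)
  rw [rofEnergy, hzero, zero_add]
  exact ENNReal.ofReal_ne_top

lemma IsMinimizer.two_mul_variation_add_integral_le (hlam : 0 < lam)
    (hu : IsMinimizer lam a b f u) {w : ℝ → EuclideanSpace ℝ (Fin n)} (hwm : Measurable w)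
    (hw : SqIntOn w (Ioo a b)) (hwbv : BoundedVariationOn w (Ioo a b)) :
    2 * lam * (eVariationOn u (Ioo a b)).toReal + ∫ x in Ioo a b, ‖u x - f x‖ ^ 2
      ≤ 2 * lam * (eVariationOn w (Ioo a b)).toReal + ∫ x in Ioo a b, ‖w x - f x‖ ^ 2 := by
  have hle := ENNReal.toReal_mono (ENNReal.add_ne_top.2 ⟨hwbv, ENNReal.ofReal_ne_top⟩)
    (hu.2.2 w hwm hw)
  rw [rofEnergy, ENNReal.toReal_add hu.boundedVariationOn ENNReal.ofReal_ne_top,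
    ENNReal.toReal_add hwbv ENNReal.ofReal_ne_top, ENNReal.toReal_ofReal (by positivity),
    ENNReal.toReal_ofReal (by positivity)] at hle
  field_simp at hle
  linarith

lemma IsMinimizer.neg_integral_inner_le (hlam : 0 < lam)
    (hf : MemLp f 2 (volume.restrict (Ioo a b))) (hu : IsMinimizer lam a b f u)
    {h : ℝ → EuclideanSpace ℝ (Fin n)} (hhm : Measurable h) (hh : BoundedVariationOn h (Ioo a b)) :
    -∫ x in Ioo a b, ⟪u x - f x, h x⟫
      ≤ lam * ((eVariationOn (fun x => u x + h x) (Ioo a b)).toReal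
          - (eVariationOn u (Ioo a b)).toReal) := by
  have hubv := hu.boundedVariationOn
  have hwbv : BoundedVariationOn (fun x => u x + h x) (Ioo a b) :=
    ne_top_of_le_ne_top (ENNReal.add_ne_top.2 ⟨hubv, hh⟩) (eVariationOn_add_le u h _)
  have hh2 := memLp_of_boundedVariationOn_Ioo hhm hh 2
  set V := (eVariationOn u (Ioo a b)).toReal
  set W := (eVariationOn (fun x => u x + h x) (Ioo a b)).toReal
  set C := ∫ x in Ioo a b, ‖h x‖ ^ 2
  -- Compare `u` with `u + t • h`, divide by `t`, and let `t` tend to `0`.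
  refine le_of_forall_le_add_mul (C := C / 2) fun t ht₀ ht₁ => ?_
  have hconvex := eVariationOn_add_smul_le u h (Ioo a b) ht₀.le ht₁
  have htop : ENNReal.ofReal (1 - t) * eVariationOn u (Ioo a b) ≠ ⊤ ∧
      ENNReal.ofReal t * eVariationOn (fun x => u x + h x) (Ioo a b) ≠ ⊤ :=
    ⟨ENNReal.mul_ne_top ENNReal.ofReal_ne_top hubv, ENNReal.mul_ne_top ENNReal.ofReal_ne_top hwbv⟩
  have hvar : (eVariationOn (fun x => u x + t • h x) (Ioo a b)).toReal ≤ (1 - t) * V + t * W := by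
    have := ENNReal.toReal_mono (ENNReal.add_ne_top.2 htop) hconvex
    rwa [ENNReal.toReal_add htop.1 htop.2, ENNReal.toReal_mul, ENNReal.toReal_mul,
      ENNReal.toReal_ofReal (sub_nonneg.2 ht₁), ENNReal.toReal_ofReal ht₀.le] at this
  have henergy := hu.two_mul_variation_add_integral_le hlam (w := fun x => u x + t • h x)
    (hu.1.add (hhm.const_smul t))
    (sqIntOn_of_memLp_two (hu.memLp_two.add (hh2.const_smul t)))
    (ne_top_of_le_ne_top (ENNReal.add_ne_top.2 htop) hconvex)
  have hexpand := integral_norm_add_smul_sq (hu.memLp_two.sub hf) hh2 t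
  simp only [Pi.sub_apply, sub_add_eq_add_sub] at hexpand
  simp only [hexpand] at henergy
  have hscaled : t * -∫ x in Ioo a b, ⟪u x - f x, h x⟫ ≤ t * (lam * (W - V) + t * (C / 2)) := by
    linear_combination henergy / 2 + lam * hvar
  exact le_of_mul_le_mul_left hscaled ht₀

lemma IsMinimizer.intervalIntegrable_sub (hu : IsMinimizer lam a b f u)
    (hf : MemLp f 2 (volume.restrict (Ioo a b))) (hab : a ≤ b) :
    IntervalIntegrable (fun s => u s - f s) volume a b :=
  (intervalIntegrable_iff_integrableOn_Ioo_of_le hab).2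
    ((hu.memLp_two.sub hf).integrable one_le_two)

lemma IsMinimizer.norm_residualPotential_le (hlam : 0 < lam)
    (hf : MemLp f 2 (volume.restrict (Ioo a b))) (hu : IsMinimizer lam a b f u) {x : ℝ}
    (hx : x ∈ Ioo a b) : ‖residualPotential b f u x‖ ≤ lam := by
  set p := residualPotential b f u x with hp
  set h : ℝ → EuclideanSpace ℝ (Fin n) := (Ici x).indicator fun _ => -p
  have hh : eVariationOn h (Ioo a b) ≤ ‖p‖ₑ := by
    simpa using eVariationOn_indicator_Ici_const_le (Ioo a b) x (-p)
  have hhbv : BoundedVariationOn h (Ioo a b) := ne_top_of_le_ne_top enorm_ne_top hh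
  have hint : ∫ s in Ioo a b, ⟪u s - f s, h s⟫ = -‖p‖ ^ 2 := by
    have hgx : IntervalIntegrable (fun s => u s - f s) volume x b :=
      hu.intervalIntegrable_sub hf (hx.1.trans hx.2).le |>.mono_set (by grind [uIcc_of_le])
    calc ∫ s in Ioo a b, ⟪u s - f s, h s⟫
        = ∫ s in Ioo a b, (Ici x).indicator (fun s => ⟪-p, u s - f s⟫) s := by
          congr 1
          funext s
          by_cases hs : s ∈ Ici x <;> simp [h, hs, real_inner_comm]
      _ = ∫ s in x..b, ⟪-p, u s - f s⟫ := by
          rw [setIntegral_indicator measurableSet_Ici, intervalIntegral.integral_of_le hx.2.le,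
            ← integral_Ico_eq_integral_Ioc]
          congr 2
          grind
      _ = -‖p‖ ^ 2 := by
          rw [intervalIntegral_const_inner hgx, ← residualPotential, ← hp, inner_neg_left,
            real_inner_self_eq_norm_sq]
  have hvar : (eVariationOn (fun s => u s + h s) (Ioo a b)).toReal
      ≤ (eVariationOn u (Ioo a b)).toReal + ‖p‖ := by
    have := ENNReal.toReal_mono (ENNReal.add_ne_top.2 ⟨hu.boundedVariationOn, enorm_ne_top⟩)
      ((eVariationOn_add_le u h (Ioo a b)).trans (add_le_add_right hh _))
    rwa [ENNReal.toReal_add hu.boundedVariationOn enorm_ne_top, toReal_enorm] at this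
  have hineq := hu.neg_integral_inner_le hlam hf (measurable_const.indicator measurableSet_Ici) hhbv
  rw [hint] at hineq
  have hsq : ‖p‖ * ‖p‖ ≤ lam * ‖p‖ := by
    linear_combination hineq + lam * hvar
  rcases (norm_nonneg p).eq_or_lt' with h0 | hpos
  · exact h0.trans_le hlam.le
  · exact le_of_mul_le_mul_right hsq hpos

lemma IsMinimizer.variation_le (hlam : 0 < lam)
    (hf : MemLp f 2 (volume.restrict (Ioo a b))) (hu : IsMinimizer lam a b f u) {x y : ℝ}
    (hx : x ∈ Ioo a b) (hy : y ∈ Ioo a b) (hxy : x ≤ y) :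
    lam * (eVariationOn u (Icc x y)).toReal
      ≤ -⟪residualPotential b f u y, u y - u x⟫ - ∫ s in x..y, ⟪u s - f s, u s - u x⟫ := by
  -- `u + h` is frozen at `u x` on `[x, y]` and keeps the increments of `u` elsewhere.
  set h : ℝ → EuclideanSpace ℝ (Fin n) := fun s => u x - u (max x (min y s))
  have hsub : Icc x y ⊆ Ioo a b := Icc_subset_Ioo hx.1 hy.2
  have hubv := hu.boundedVariationOn
  have hhm : Measurable h :=
    measurable_const.sub (hu.1.comp (measurable_const.max (measurable_const.min measurable_id)))
  have hvar : eVariationOn (fun s => u s + h s) (Ioo a b) + eVariationOn u (Icc x y)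
      ≤ eVariationOn u (Ioo a b) := by
    simpa [inter_eq_right.2 hsub] using eVariationOn_sub_comp_clamp_add_le u hx hy hxy
  have hwbv : BoundedVariationOn (fun s => u s + h s) (Ioo a b) :=
    ne_top_of_le_ne_top hubv (le_self_add.trans hvar)
  have hhbv : BoundedVariationOn h (Ioo a b) := by
    refine ne_top_of_le_ne_top hubv ?_
    rw [eVariationOn_const_sub]
    exact eVariationOn.comp_le_of_monotoneOn u _ (fun s _ t _ hst => by gcongr) fun s _ =>
      hsub ⟨le_max_left _ _, max_le hxy (min_le_left _ _)⟩
  have hab : a ≤ b := (hx.1.trans hx.2).le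
  have hgh : IntervalIntegrable (fun s => ⟪u s - f s, h s⟫) volume a b :=
    (intervalIntegrable_iff_integrableOn_Ioo_of_le hab).2
      (integrable_inner_of_memLp_two_s12 (hu.memLp_two.sub hf)
        (memLp_of_boundedVariationOn_Ioo hhm hhbv 2))
  have hvar_real : (eVariationOn (fun s => u s + h s) (Ioo a b)).toReal
      + (eVariationOn u (Icc x y)).toReal ≤ (eVariationOn u (Ioo a b)).toReal := by
    rw [← ENNReal.toReal_add hwbv (hubv.mono hsub)]
    exact ENNReal.toReal_mono hubv hvar
  have hineq := hu.neg_integral_inner_le hlam hf hhm hhbv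
  rw [← integral_Ioc_eq_integral_Ioo, ← intervalIntegral.integral_of_le hab,
    intervalIntegral_inner_sub_comp_clamp (hu.intervalIntegrable_sub hf hab) hgh hx.1.le hxy
      hy.2.le,
    ← residualPotential] at hineq
  linear_combination hineq + lam * hvar_real

lemma IsMinimizer.isCalibrated (hlam : 0 < lam) (hab : a ≤ b)
    (hf : MemLp f 2 (volume.restrict (Ioo a b))) (hu : IsMinimizer lam a b f u) :
    IsCalibrated lam a b f u where
  boundedVariationOn := hu.boundedVariationOn
  intervalIntegrable := hu.intervalIntegrable_sub hf hab
  norm_le _ hx := hu.norm_residualPotential_le hlam hf hx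
  variation_le _ hx _ hy hxy := hu.variation_le hlam hf hx hy hxy

end Minimizer

section Topology

lemma exists_last_first_eq_of_continuousOn {X : Type*} [TopologicalSpace X] [T1Space X] {u : ℝ → X}
    {x y : ℝ} (hxy : x ≤ y) (hu : ContinuousOn u (Icc x y)) (hne : u x ≠ u y) :
    ∃ p q, x ≤ p ∧ p < q ∧ q ≤ y ∧ u p = u x ∧ u q = u y ∧
      ∀ s ∈ Ioo p q, u s ≠ u x ∧ u s ≠ u y := by
  have hlevel : ∀ z c, Icc z y ⊆ Icc x y → IsCompact (Icc z y ∩ u ⁻¹' {c}) := fun z c hz =>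
    isCompact_Icc.of_isClosed_subset
      ((hu.mono hz).preimage_isClosed_of_isClosed isClosed_Icc isClosed_singleton) inter_subset_left
  obtain ⟨p, ⟨hp, hup : u p = u x⟩, hp_last⟩ :=
    (hlevel x (u x) subset_rfl).exists_isGreatest ⟨x, left_mem_Icc.2 hxy, rfl⟩
  obtain ⟨q, ⟨hq, huq : u q = u y⟩, hq_first⟩ :=
    (hlevel p (u y) (Icc_subset_Icc_left hp.1)).exists_isLeast ⟨y, right_mem_Icc.2 hp.2, rfl⟩
  have hpq : p < q := hq.1.lt_of_ne (by grind)
  exact ⟨p, q, hp.1, hpq, hq.2, hup, huq, fun s hs =>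
    ⟨fun heq => hs.1.not_ge (hp_last ⟨⟨hp.1.trans hs.1.le, hs.2.le.trans hq.2⟩, heq⟩),
      fun heq => hs.2.not_ge (hq_first ⟨⟨hs.1.le, hs.2.le.trans hq.2⟩, heq⟩)⟩⟩

lemma rel_of_rel_of_sub_le {R : ℝ → ℝ → Prop} {c d δ : ℝ} (hδ : 0 < δ) (hcd : c ≤ d)
    (htrans : ∀ x y z, c ≤ x → x ≤ y → y ≤ z → z ≤ d → R x y → R y z → R x z)
    (hshort : ∀ x y, c ≤ x → x ≤ y → y ≤ d → y - x ≤ δ → R x y) : R c d := by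
  have hinit : ∀ (k : ℕ) (y : ℝ), c ≤ y → y ≤ d → y - c ≤ k * δ → R c y := by
    intro k
    induction k with
    | zero =>
      intro y hcy hyd hy
      refine hshort c y le_rfl hcy hyd ?_
      rw [Nat.cast_zero, zero_mul] at hy
      exact hy.trans hδ.le
    | succ k ih =>
      intro y hcy hyd hy
      have hle : max c (y - δ) ≤ y := max_le hcy (sub_le_self y hδ.le)
      refine htrans c (max c (y - δ)) y le_rfl (le_max_left _ _) hle hyd
        (ih _ (le_max_left _ _) (hle.trans hyd) ?_)
        (hshort _ y (le_max_left _ _) hle hyd (by linarith [le_max_right c (y - δ)]))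
      rw [sub_le_iff_le_add]
      refine max_le (le_add_of_nonneg_left (by positivity)) ?_
      push_cast at hy
      linarith
  obtain ⟨k, hk⟩ := exists_nat_ge ((d - c) / δ)
  exact hinit k d hcd le_rfl ((div_le_iff₀ hδ).1 hk)

end Topology

lemma neg_inner_self_add_le {E : Type*} [NormedAddCommGroup E] [InnerProductSpace ℝ E] (g k : E) :
    -⟪g, g + k⟫ ≤ ‖k‖ ^ 2 / 4 := by
  have hsq : 0 ≤ ‖(2 : ℝ) • g + k‖ ^ 2 := sq_nonneg _
  rw [norm_add_sq_real, norm_smul, real_inner_smul_left, Real.norm_ofNat] at hsq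
  rw [inner_add_right, real_inner_self_eq_norm_sq]
  linarith

section OneSidedSign

variable {φ : ℝ → ℝ} {p L : ℝ}

lemma nonneg_of_tendsto_nhdsGT_of_integral_nonneg (hφ : Tendsto φ (𝓝[>] p) (𝓝 L))
    (hint : ∀ᶠ y in 𝓝[>] p, IntervalIntegrable φ volume p y ∧ 0 ≤ ∫ s in p..y, φ s) : 0 ≤ L := by
  by_contra! hL
  obtain ⟨q, hpq, hq⟩ := (mem_nhdsGT_iff_exists_Ioo_subset' (lt_add_one p)).1
    ((hφ.eventually (gt_mem_nhds hL)).and hint)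
  obtain ⟨y, hpy, hyq⟩ := exists_between (mem_Ioi.1 hpq)
  obtain ⟨hφy, hnonneg⟩ := (hq ⟨hpy, hyq⟩).2
  have hpos : 0 < ∫ s in p..y, -φ s :=
    intervalIntegral.intervalIntegral_pos_of_pos_on hφy.neg
      (fun s hs => neg_pos.2 (hq ⟨hs.1, hs.2.trans hyq⟩).1) hpy
  rw [intervalIntegral.integral_neg] at hpos
  linarith

lemma nonpos_of_tendsto_nhdsLT_of_integral_nonneg (hφ : Tendsto φ (𝓝[<] p) (𝓝 L))
    (hint : ∀ᶠ x in 𝓝[<] p, IntervalIntegrable φ volume p x ∧ 0 ≤ ∫ s in p..x, φ s) : L ≤ 0 := by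
  by_contra! hL
  obtain ⟨q, hqp, hq⟩ := (mem_nhdsLT_iff_exists_Ioo_subset' (sub_one_lt p)).1
    ((hφ.eventually (lt_mem_nhds hL)).and hint)
  obtain ⟨x, hqx, hxp⟩ := exists_between (mem_Iio.1 hqp)
  obtain ⟨hφx, hnonneg⟩ := (hq ⟨hqx, hxp⟩).2
  have hpos : 0 < ∫ s in x..p, φ s :=
    intervalIntegral.intervalIntegral_pos_of_pos_on hφx.symm
      (fun s hs => (hq ⟨hqx.trans hs.1, hs.2⟩).1) hxp
  rw [intervalIntegral.integral_symm] at hpos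
  linarith

end OneSidedSign

lemma continuousAt_intervalIntegral_left {E : Type*} [NormedAddCommGroup E] [NormedSpace ℝ E]
    {φ : ℝ → E} {a b p : ℝ} (hφ : IntervalIntegrable φ volume a b) (hp : p ∈ Ioo a b) :
    ContinuousAt (fun x => ∫ s in x..b, φ s) p := by
  have hab : a ≤ b := (hp.1.trans hp.2).le
  have hφ' : IntegrableOn φ (uIcc a b) := by
    rwa [uIcc_of_le hab, integrableOn_Icc_iff_integrableOn_Ioc,
      ← intervalIntegrable_iff_integrableOn_Ioc_of_le hab]
  refine (intervalIntegral.continuousOn_primitive_interval_left hφ').continuousAt ?_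
  rw [uIcc_of_le hab]
  exact Icc_mem_nhds hp.1 hp.2

lemma intervalIntegral_sub_common_right {E : Type*} [NormedAddCommGroup E] [NormedSpace ℝ E]
    {φ : ℝ → E} {a b x y : ℝ} (hφ : IntervalIntegrable φ volume a b) (hx : x ∈ Icc a b)
    (hy : y ∈ Icc a b) : (∫ s in x..b, φ s) - ∫ s in y..b, φ s = ∫ s in x..y, φ s := by
  refine sub_eq_of_eq_add (intervalIntegral.integral_add_adjacent_intervals ?_ ?_).symm
  · exact hφ.mono_set (uIcc_subset_uIcc (Icc_subset_uIcc hx) (Icc_subset_uIcc hy))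
  · exact hφ.mono_set (uIcc_subset_uIcc_right (Icc_subset_uIcc hy))

namespace IsCalibrated

variable {E : Type*} [NormedAddCommGroup E] [InnerProductSpace ℝ E] {lam a b : ℝ} {f u : ℝ → E}

local notation "P" => residualPotential b f u

lemma nonneg (h : IsCalibrated lam a b f u) {x : ℝ} (hx : x ∈ Ioo a b) : 0 ≤ lam :=
  (norm_nonneg _).trans (h.norm_le x hx)

lemma intervalIntegrable_of_mem (h : IsCalibrated lam a b f u) {x y : ℝ} (hx : x ∈ Icc a b)
    (hy : y ∈ Icc a b) : IntervalIntegrable (fun s => u s - f s) volume x y :=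
  h.intervalIntegrable.mono_set (uIcc_subset_uIcc (Icc_subset_uIcc hx) (Icc_subset_uIcc hy))

lemma residualPotential_sub (h : IsCalibrated lam a b f u) {x y : ℝ} (hx : x ∈ Ioo a b)
    (hy : y ∈ Ioo a b) : P x - P y = ∫ s in x..y, (u s - f s) :=
  intervalIntegral_sub_common_right h.intervalIntegrable (Ioo_subset_Icc_self hx)
    (Ioo_subset_Icc_self hy)

lemma continuousAt_residualPotential (h : IsCalibrated lam a b f u) {p : ℝ} (hp : p ∈ Ioo a b) :
    ContinuousAt P p :=
  continuousAt_intervalIntegral_left h.intervalIntegrable hp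

lemma norm_sub_le_variation (h : IsCalibrated lam a b f u) {x y : ℝ} (hx : x ∈ Ioo a b)
    (hy : y ∈ Ioo a b) {s t : ℝ} (hs : s ∈ Icc x y) (ht : t ∈ Icc x y) :
    ‖u s - u t‖ ≤ (eVariationOn u (Icc x y)).toReal := by
  rw [← dist_eq_norm]
  exact (h.boundedVariationOn.mono (Icc_subset_Ioo hx.1 hy.2)).dist_le hs ht

lemma mul_variation_le (h : IsCalibrated lam a b f u) {x y : ℝ} (hx : x ∈ Ioo a b)
    (hy : y ∈ Ioo a b) (hxy : x ≤ y) :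
    lam * (eVariationOn u (Icc x y)).toReal
      ≤ -⟪P y, u y - u x⟫ + (eVariationOn u (Icc x y)).toReal * ∫ s in x..y, ‖u s - f s‖ := by
  set V := (eVariationOn u (Icc x y)).toReal
  have hbound : ‖∫ s in x..y, ⟪u s - f s, u s - u x⟫‖ ≤ ∫ s in x..y, V * ‖u s - f s‖ := by
    refine intervalIntegral.norm_integral_le_of_norm_le hxy (ae_of_all _ fun s hs => ?_)
      ((h.intervalIntegrable_of_mem (Ioo_subset_Icc_self hx)
        (Ioo_subset_Icc_self hy)).norm.const_mul V)
    rw [mul_comm]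
    exact (norm_inner_le_norm _ _).trans (mul_le_mul_of_nonneg_left
      (h.norm_sub_le_variation hx hy (Ioc_subset_Icc_self hs) (left_mem_Icc.2 hxy)) (norm_nonneg _))
  rw [intervalIntegral.integral_const_mul] at hbound
  linarith [h.variation_le x hx y hy hxy, neg_le_of_abs_le hbound]

lemma eq_of_norm_residualPotential_add_integral_lt (h : IsCalibrated lam a b f u) {x y : ℝ}
    (hx : x ∈ Ioo a b) (hy : y ∈ Ioo a b) (hxy : x ≤ y)
    (hlt : ‖P y‖ + ∫ s in x..y, ‖u s - f s‖ < lam) : u x = u y := by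
  set V := (eVariationOn u (Icc x y)).toReal
  have hV : ‖u y - u x‖ ≤ V :=
    h.norm_sub_le_variation hx hy (right_mem_Icc.2 hxy) (left_mem_Icc.2 hxy)
  have hinner : -⟪P y, u y - u x⟫ ≤ ‖P y‖ * V :=
    ((neg_le_abs _).trans (abs_real_inner_le_norm _ _)).trans
      (mul_le_mul_of_nonneg_left hV (norm_nonneg _))
  have hVle : V ≤ 0 := by
    by_contra! hpos
    nlinarith [h.mul_variation_le hx hy hxy]
  exact (sub_eq_zero.1 (norm_le_zero_iff.1 (hV.trans hVle))).symm

lemma eventually_eq_of_norm_residualPotential_lt (h : IsCalibrated lam a b f u) {p : ℝ}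
    (hp : p ∈ Ioo a b) (hlt : ‖P p‖ < lam) : ∀ᶠ s in 𝓝 p, u s = u p := by
  have hmin : Tendsto (fun s => min p s) (𝓝 p) (𝓝 p) := by
    simpa using (continuous_const.min continuous_id).tendsto (f := fun s => min p s) p
  have hmax : Tendsto (fun s => max p s) (𝓝 p) (𝓝 p) := by
    simpa using (continuous_const.max continuous_id).tendsto (f := fun s => max p s) p
  have hN := continuousAt_intervalIntegral_left h.intervalIntegrable.norm hp
  have hlim : Tendsto (fun s => ‖P (max p s)‖
      + ((∫ t in min p s..b, ‖u t - f t‖) - ∫ t in max p s..b, ‖u t - f t‖)) (𝓝 p) (𝓝 ‖P p‖) := by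
    simpa using ((h.continuousAt_residualPotential hp).tendsto.comp hmax).norm.add
      ((hN.tendsto.comp hmin).sub (hN.tendsto.comp hmax))
  filter_upwards [hlim.eventually (gt_mem_nhds hlt), isOpen_Ioo.mem_nhds hp] with s hs hsI
  have hmin_mem : min p s ∈ Ioo a b := ⟨lt_min hp.1 hsI.1, (min_le_left _ _).trans_lt hp.2⟩
  have hmax_mem : max p s ∈ Ioo a b := ⟨hp.1.trans_le (le_max_left _ _), max_lt hp.2 hsI.2⟩
  rw [intervalIntegral_sub_common_right h.intervalIntegrable.norm (Ioo_subset_Icc_self hmin_mem)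
    (Ioo_subset_Icc_self hmax_mem)] at hs
  have heq := h.eq_of_norm_residualPotential_add_integral_lt hmin_mem hmax_mem
    min_le_max hs
  rcases le_total p s with hps | hsp
  · simpa [hps] using heq.symm
  · simpa [hsp] using heq

section Complete

variable [CompleteSpace E]

lemma integral_inner_nonneg (h : IsCalibrated lam a b f u) {p y : ℝ} (hp : p ∈ Ioo a b)
    (hy : y ∈ Ioo a b) (hPp : ‖P p‖ = lam) :
    IntervalIntegrable (fun s => ⟪P p, u s - f s⟫) volume p y ∧
      0 ≤ ∫ s in p..y, ⟪P p, u s - f s⟫ := by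
  have hg := h.intervalIntegrable_of_mem (Ioo_subset_Icc_self hp) (Ioo_subset_Icc_self hy)
  refine ⟨(intervalIntegrable_iff.1 hg).const_inner (P p) |> intervalIntegrable_iff.2, ?_⟩
  rw [intervalIntegral_const_inner hg, ← h.residualPotential_sub hp hy, inner_sub_right,
    real_inner_self_eq_norm_sq, sub_nonneg, sq]
  exact (real_inner_le_norm _ _).trans
    (mul_le_mul_of_nonneg_left ((h.norm_le y hy).trans_eq hPp.symm) (norm_nonneg _))

lemma inner_nonneg_of_tendsto_nhdsGT (h : IsCalibrated lam a b f u) {p : ℝ} (hp : p ∈ Ioo a b)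
    (hPp : ‖P p‖ = lam) {g : E} (hg : Tendsto (fun s => u s - f s) (𝓝[>] p) (𝓝 g)) :
    0 ≤ ⟪P p, g⟫ := by
  refine nonneg_of_tendsto_nhdsGT_of_integral_nonneg (tendsto_const_nhds.inner hg) ?_
  filter_upwards [Ioo_mem_nhdsGT hp.2] with y hy
  exact h.integral_inner_nonneg hp ⟨hp.1.trans hy.1, hy.2⟩ hPp

lemma inner_nonpos_of_tendsto_nhdsLT (h : IsCalibrated lam a b f u) {p : ℝ} (hp : p ∈ Ioo a b)
    (hPp : ‖P p‖ = lam) {g : E} (hg : Tendsto (fun s => u s - f s) (𝓝[<] p) (𝓝 g)) :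
    ⟪P p, g⟫ ≤ 0 := by
  refine nonpos_of_tendsto_nhdsLT_of_integral_nonneg (tendsto_const_nhds.inner hg) ?_
  filter_upwards [Ioo_mem_nhdsLT hp.1] with x hx
  exact h.integral_inner_nonneg hp ⟨hx.1, hx.2.trans hp.2⟩ hPp

lemma inner_residualPotential_eq_zero (h : IsCalibrated lam a b f u) {p : ℝ} (hp : p ∈ Ioo a b)
    (hPp : ‖P p‖ = lam) (hu : ContinuousAt u p) (hf : ContinuousAt f p) :
    ⟪P p, u p - f p⟫ = 0 :=
  le_antisymm
    (h.inner_nonpos_of_tendsto_nhdsLT hp hPp ((hu.sub hf).tendsto.mono_left nhdsWithin_le_nhds))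
    (h.inner_nonneg_of_tendsto_nhdsGT hp hPp ((hu.sub hf).tendsto.mono_left nhdsWithin_le_nhds))

end Complete

lemma mul_norm_sub_add_norm_sub_le (h : IsCalibrated lam a b f u) {x p y : ℝ}
    (hx : x ∈ Ioo a b) (hy : y ∈ Ioo a b) (hxp : x ≤ p) (hpy : p ≤ y) :
    lam * (‖u p - u x‖ + ‖u y - u p‖) ≤ -⟪P y, u y - u x⟫
      + (eVariationOn u (Ioo a b)).toReal * ∫ s in x..y, ‖u s - f s‖ := by
  have hlam := h.nonneg hx
  have hsub : Icc x y ⊆ Ioo a b := Icc_subset_Ioo hx.1 hy.2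
  have htriangle : ‖u p - u x‖ + ‖u y - u p‖ ≤ (eVariationOn u (Icc x y)).toReal := by
    simpa only [ENNReal.toReal_add (edist_ne_top _ _) (edist_ne_top _ _), ← dist_edist,
      dist_eq_norm] using ENNReal.toReal_mono (h.boundedVariationOn.mono hsub)
        (edist_add_edist_le_eVariationOn_Icc u hxp hpy)
  calc lam * (‖u p - u x‖ + ‖u y - u p‖)
      ≤ lam * (eVariationOn u (Icc x y)).toReal := by gcongr
    _ ≤ -⟪P y, u y - u x⟫ + (eVariationOn u (Icc x y)).toReal * ∫ s in x..y, ‖u s - f s‖ :=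
        h.mul_variation_le hx hy (hxp.trans hpy)
    _ ≤ _ := by
        gcongr
        · exact intervalIntegral.integral_nonneg (hxp.trans hpy) fun _ _ => norm_nonneg _
        · exact h.boundedVariationOn
        · exact eVariationOn.mono u hsub

lemma mul_norm_sub_leftLim_add_norm_rightLim_sub_le (h : IsCalibrated lam a b f u)
    {p : ℝ} (hp : p ∈ Ioo a b) {l r : E} (hl : Tendsto u (𝓝[<] p) (𝓝 l))
    (hr : Tendsto u (𝓝[>] p) (𝓝 r)) :
    lam * (‖u p - l‖ + ‖r - u p‖) ≤ -⟪P p, r - l⟫ := by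
  set V := (eVariationOn u (Ioo a b)).toReal
  set N : ℝ → ℝ := fun x => ∫ s in x..b, ‖u s - f s‖
  have hx : Tendsto (Prod.fst : ℝ × ℝ → ℝ) (𝓝[<] p ×ˢ 𝓝[>] p) (𝓝 p) :=
    tendsto_fst.mono_right nhdsWithin_le_nhds
  have hy : Tendsto (Prod.snd : ℝ × ℝ → ℝ) (𝓝[<] p ×ˢ 𝓝[>] p) (𝓝 p) :=
    tendsto_snd.mono_right nhdsWithin_le_nhds
  have hux : Tendsto (fun z : ℝ × ℝ => u z.1) (𝓝[<] p ×ˢ 𝓝[>] p) (𝓝 l) := hl.comp tendsto_fst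
  have huy : Tendsto (fun z : ℝ × ℝ => u z.2) (𝓝[<] p ×ˢ 𝓝[>] p) (𝓝 r) := hr.comp tendsto_snd
  have hN : Tendsto N (𝓝 p) (𝓝 (N p)) :=
    continuousAt_intervalIntegral_left h.intervalIntegrable.norm hp
  have hlhs : Tendsto (fun z : ℝ × ℝ => lam * (‖u p - u z.1‖ + ‖u z.2 - u p‖))
      (𝓝[<] p ×ˢ 𝓝[>] p) (𝓝 (lam * (‖u p - l‖ + ‖r - u p‖))) :=
    ((hux.const_sub (u p)).norm.add (huy.sub_const (u p)).norm).const_mul lam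
  have hrhs : Tendsto (fun z : ℝ × ℝ => -⟪P z.2, u z.2 - u z.1⟫ + V * (N z.1 - N z.2))
      (𝓝[<] p ×ˢ 𝓝[>] p) (𝓝 (-⟪P p, r - l⟫)) := by
    simpa using
      (((h.continuousAt_residualPotential hp).tendsto.comp hy).inner (huy.sub hux)).neg.add
        (((hN.comp hx).sub (hN.comp hy)).const_mul V)
  refine le_of_tendsto_of_tendsto hlhs hrhs ?_
  filter_upwards [prod_mem_prod (Ioo_mem_nhdsLT hp.1) (Ioo_mem_nhdsGT hp.2)] with z hz
  have hx : z.1 ∈ Ioo a b := ⟨hz.1.1, hz.1.2.trans hp.2⟩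
  have hy : z.2 ∈ Ioo a b := ⟨hp.1.trans hz.2.1, hz.2.2⟩
  rw [intervalIntegral_sub_common_right h.intervalIntegrable.norm (Ioo_subset_Icc_self hx)
    (Ioo_subset_Icc_self hy)]
  exact h.mul_norm_sub_add_norm_sub_le hx hy hz.1.2.le hz.2.1.le

lemma continuousAt [CompleteSpace E] (h : IsCalibrated lam a b f u) (hlam : 0 < lam) {p : ℝ}
    (hp : p ∈ Ioo a b) (hf : ContinuousAt f p) : ContinuousAt u p := by
  obtain ⟨l, hl⟩ := h.boundedVariationOn.exists_tendsto_left p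
  obtain ⟨r, hr⟩ := h.boundedVariationOn.exists_tendsto_right p
  have hI : Ioo a b ∈ 𝓝 p := isOpen_Ioo.mem_nhds hp
  rw [nhdsWithin_inter_of_mem (mem_nhdsWithin_of_mem_nhds hI)] at hl hr
  have hjump := h.mul_norm_sub_leftLim_add_norm_rightLim_sub_le hp hl hr
  have htriangle : ‖r - l‖ ≤ ‖u p - l‖ + ‖r - u p‖ := by
    rw [add_comm, ← sub_add_sub_cancel r (u p) l]
    exact norm_add_le _ _
  have hinner : 0 ≤ ⟪P p, r - l⟫ := by
    rcases (h.norm_le p hp).lt_or_eq with hlt | heq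
    · have hrl : r - l = 0 := by
        by_contra hne
        have := norm_pos_iff.2 hne
        nlinarith [neg_le_of_abs_le (abs_real_inner_le_norm (P p) (r - l))]
      rw [hrl, inner_zero_right]
    · have hfl : Tendsto f (𝓝[<] p) (𝓝 (f p)) := hf.tendsto.mono_left nhdsWithin_le_nhds
      have hfr : Tendsto f (𝓝[>] p) (𝓝 (f p)) := hf.tendsto.mono_left nhdsWithin_le_nhds
      have hright := h.inner_nonneg_of_tendsto_nhdsGT hp heq (hr.sub hfr)
      have hleft := h.inner_nonpos_of_tendsto_nhdsLT hp heq (hl.sub hfl)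
      rw [inner_sub_right] at hright hleft ⊢
      linarith
  have hzero : ‖u p - l‖ + ‖r - u p‖ ≤ 0 := by
    by_contra! hpos
    nlinarith
  have hul : u p = l := by
    rw [← sub_eq_zero, ← norm_le_zero_iff]
    linarith [norm_nonneg (r - u p)]
  have hur : r = u p := by
    rw [← sub_eq_zero, ← norm_le_zero_iff]
    linarith [norm_nonneg (u p - l)]
  rw [← hul] at hl
  rw [hur] at hr
  exact continuousAt_iff_continuous_left'_right'.2 ⟨hl, hr⟩

lemma neg_inner_sub_integral_inner_eq [CompleteSpace E] (h : IsCalibrated lam a b f u) {p q : ℝ}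
    (hp : p ∈ Ioo a b) (hq : q ∈ Ioo a b) (hpq : p ≤ q) (hu : ContinuousOn u (Icc p q))
    (hf : ContinuousOn f (Icc p q)) (hPp : ⟪P p, u p - f p⟫ = 0) (hPq : ⟪P q, u q - f q⟫ = 0) :
    -⟪P q, u q - u p⟫ - ∫ s in p..q, ⟪u s - f s, u s - u p⟫
      = -⟪P q, f q - f p⟫ - ∫ s in p..q, ⟪u s - f s, (u s - f s) + (f s - f p)⟫ := by
  rw [← uIcc_of_le hpq] at hu hf
  have hPq' : ⟪P q, u p - f p⟫ = -∫ s in p..q, ⟪u p - f p, u s - f s⟫ := by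
    rw [intervalIntegral_const_inner (h.intervalIntegrable_of_mem
      (Ioo_subset_Icc_self hp) (Ioo_subset_Icc_self hq)),
      ← h.residualPotential_sub hp hq, inner_sub_right (u p - f p),
      real_inner_comm (P p), hPp, zero_sub, neg_neg, real_inner_comm]
  have hint : (∫ s in p..q, ⟪u s - f s, (u s - f s) + (f s - f p)⟫)
      - ∫ s in p..q, ⟪u s - f s, u s - u p⟫ = ∫ s in p..q, ⟪u p - f p, u s - f s⟫ := by
    rw [← intervalIntegral.integral_sub]
    · refine intervalIntegral.integral_congr fun s _ => ?_
      rw [← inner_sub_right, real_inner_comm]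
      congr 1
      abel
    · exact ((hu.sub hf).inner ((hu.sub hf).add (hf.sub continuousOn_const))).intervalIntegrable
    · exact ((hu.sub hf).inner (hu.sub continuousOn_const)).intervalIntegrable
  have hdecomp : ⟪P q, u q - u p⟫
      = ⟪P q, u q - f q⟫ + ⟪P q, f q - f p⟫ - ⟪P q, u p - f p⟫ := by
    rw [← inner_add_right, ← inner_sub_right]
    congr 1
    abel
  linarith

lemma mul_norm_sub_le_of_inner_eq_zero [CompleteSpace E] (h : IsCalibrated lam a b f u)
    {p q ω : ℝ} (hp : p ∈ Ioo a b) (hq : q ∈ Ioo a b) (hpq : p ≤ q)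
    (hu : ContinuousOn u (Icc p q)) (hf : ContinuousOn f (Icc p q))
    (hPp : ⟪P p, u p - f p⟫ = 0) (hPq : ⟪P q, u q - f q⟫ = 0)
    (hω : ∀ s ∈ Icc p q, ‖f s - f p‖ ≤ ω) :
    lam * ‖u q - u p‖ ≤ lam * ‖f q - f p‖ + (q - p) * (ω ^ 2 / 4) := by
  have hg : ContinuousOn (fun s => u s - f s) (uIcc p q) := by
    rw [uIcc_of_le hpq]
    exact hu.sub hf
  have hk : ContinuousOn (fun s => f s - f p) (uIcc p q) := by
    rw [uIcc_of_le hpq]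
    exact hf.sub continuousOn_const
  have hquadratic :
      -∫ s in p..q, ⟪u s - f s, (u s - f s) + (f s - f p)⟫ ≤ (q - p) * (ω ^ 2 / 4) := by
    rw [← intervalIntegral.integral_neg, ← smul_eq_mul, ← intervalIntegral.integral_const]
    refine intervalIntegral.integral_mono_on hpq (hg.inner (hg.add hk)).intervalIntegrable.neg
      intervalIntegrable_const fun s hs => (neg_inner_self_add_le _ _).trans ?_
    gcongr
    exact hω s hs
  have hdatum : -⟪P q, f q - f p⟫ ≤ lam * ‖f q - f p‖ :=
    ((neg_le_abs _).trans (abs_real_inner_le_norm _ _)).trans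
      (mul_le_mul_of_nonneg_right (h.norm_le q hq) (norm_nonneg _))
  calc lam * ‖u q - u p‖
      ≤ lam * (eVariationOn u (Icc p q)).toReal := mul_le_mul_of_nonneg_left
        (h.norm_sub_le_variation hp hq (right_mem_Icc.2 hpq) (left_mem_Icc.2 hpq)) (h.nonneg hp)
    _ ≤ -⟪P q, u q - u p⟫ - ∫ s in p..q, ⟪u s - f s, u s - u p⟫ := h.variation_le p hp q hq hpq
    _ = -⟪P q, f q - f p⟫ - ∫ s in p..q, ⟪u s - f s, (u s - f s) + (f s - f p)⟫ :=
        h.neg_inner_sub_integral_inner_eq hp hq hpq hu hf hPp hPq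
    _ ≤ lam * ‖f q - f p‖ + (q - p) * (ω ^ 2 / 4) := by linarith

section ContinuousDatum

variable [CompleteSpace E]

lemma continuousOn (h : IsCalibrated lam a b f u) (hlam : 0 < lam)
    (hf : ContinuousOn f (Ioo a b)) : ContinuousOn u (Ioo a b) := fun _ hp =>
  (h.continuousAt hlam hp (hf.continuousAt (isOpen_Ioo.mem_nhds hp))).continuousWithinAt

lemma inner_residualPotential_eq_zero_of_frequently_ne (h : IsCalibrated lam a b f u)
    (hlam : 0 < lam) {p : ℝ} (hp : p ∈ Ioo a b) (hf : ContinuousAt f p)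
    (hne : ∃ᶠ s in 𝓝 p, u s ≠ u p) : ⟪P p, u p - f p⟫ = 0 := by
  have hPp : ‖P p‖ = lam := (h.norm_le p hp).eq_of_not_lt fun hlt =>
    hne ((h.eventually_eq_of_norm_residualPotential_lt hp hlt).mono fun _ => not_not_intro)
  exact h.inner_residualPotential_eq_zero hp hPp (h.continuousAt hlam hp hf) hf

lemma exists_norm_sub_le (h : IsCalibrated lam a b f u) (hlam : 0 < lam)
    (hf : ContinuousOn f (Ioo a b)) {x y ω : ℝ} (hx : x ∈ Ioo a b) (hy : y ∈ Ioo a b) (hxy : x ≤ y)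
    (hω : ∀ s ∈ Icc x y, ∀ t ∈ Icc x y, ‖f s - f t‖ ≤ ω) :
    ∃ p ∈ Icc x y, ∃ q ∈ Icc x y,
      lam * ‖u y - u x‖ ≤ lam * ‖f q - f p‖ + (y - x) * (ω ^ 2 / 4) := by
  rcases eq_or_ne (u x) (u y) with heq | hne
  · refine ⟨x, left_mem_Icc.2 hxy, x, left_mem_Icc.2 hxy, ?_⟩
    simp only [heq, sub_self, norm_zero, mul_zero, zero_add]
    exact mul_nonneg (sub_nonneg.2 hxy) (by positivity)
  have hu := h.continuousOn hlam hf
  have hsub : Icc x y ⊆ Ioo a b := Icc_subset_Ioo hx.1 hy.2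
  obtain ⟨p, q, hxp, hpq, hqy, hup, huq, hne_Ioo⟩ :=
    exists_last_first_eq_of_continuousOn hxy (hu.mono hsub) hne
  have hpq_sub : Icc p q ⊆ Icc x y := Icc_subset_Icc hxp hqy
  have hp : p ∈ Icc x y := hpq_sub (left_mem_Icc.2 hpq.le)
  have hq : q ∈ Icc x y := hpq_sub (right_mem_Icc.2 hpq.le)
  have hfp : ContinuousAt f p := hf.continuousAt (isOpen_Ioo.mem_nhds (hsub hp))
  have hfq : ContinuousAt f q := hf.continuousAt (isOpen_Ioo.mem_nhds (hsub hq))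
  have hfreq_p : ∃ᶠ s in 𝓝 p, u s ≠ u p := by
    refine Frequently.filter_mono (Eventually.frequently ?_)
      (nhdsWithin_le_nhds (s := Ioi p))
    filter_upwards [Ioo_mem_nhdsGT hpq] with s hs
    exact hup ▸ (hne_Ioo s hs).1
  have hfreq_q : ∃ᶠ s in 𝓝 q, u s ≠ u q := by
    refine Frequently.filter_mono (Eventually.frequently ?_)
      (nhdsWithin_le_nhds (s := Iio q))
    filter_upwards [Ioo_mem_nhdsLT hpq] with s hs
    exact huq ▸ (hne_Ioo s hs).2
  refine ⟨p, hp, q, hq, ?_⟩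
  rw [← hup, ← huq]
  refine (h.mul_norm_sub_le_of_inner_eq_zero (hsub hp) (hsub hq) hpq.le
    (hu.mono (hpq_sub.trans hsub)) (hf.mono (hpq_sub.trans hsub))
    (h.inner_residualPotential_eq_zero_of_frequently_ne hlam (hsub hp) hfp hfreq_p)
    (h.inner_residualPotential_eq_zero_of_frequently_ne hlam (hsub hq) hfq hfreq_q)
    fun s hs => hω s (hpq_sub hs) p hp).trans ?_
  gcongr

lemma edist_le_eVariationOn_add (h : IsCalibrated lam a b f u) (hlam : 0 < lam)
    (hf : ContinuousOn f (Ioo a b)) {x y ω : ℝ} (hx : x ∈ Ioo a b) (hy : y ∈ Ioo a b) (hxy : x ≤ y)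
    (hω : ∀ s ∈ Icc x y, ∀ t ∈ Icc x y, ‖f s - f t‖ ≤ ω) :
    edist (u x) (u y)
      ≤ eVariationOn f (Icc x y) + ENNReal.ofReal (ω ^ 2 / (4 * lam) * (y - x)) := by
  obtain ⟨p, hp, q, hq, hle⟩ := h.exists_norm_sub_le hlam hf hx hy hxy hω
  have hnorm : ‖u y - u x‖ ≤ ‖f q - f p‖ + ω ^ 2 / (4 * lam) * (y - x) := by
    refine le_of_mul_le_mul_left (hle.trans_eq ?_) hlam
    field_simp
  calc edist (u x) (u y) = ENNReal.ofReal ‖u y - u x‖ := by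
        rw [edist_comm, edist_dist, dist_eq_norm]
    _ ≤ ENNReal.ofReal ‖f q - f p‖ + ENNReal.ofReal (ω ^ 2 / (4 * lam) * (y - x)) :=
        (ENNReal.ofReal_le_ofReal hnorm).trans ENNReal.ofReal_add_le
    _ ≤ _ := by
        rw [← dist_eq_norm, ← edist_dist]
        gcongr
        exact eVariationOn.edist_le f hq hp

lemma edist_le_eVariationOn_add_of_dist_le (h : IsCalibrated lam a b f u) (hlam : 0 < lam)
    (hf : ContinuousOn f (Ioo a b)) {c d δ ω : ℝ} (hcd : c ≤ d) (hsub : Icc c d ⊆ Ioo a b)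
    (hδ : 0 < δ) (hω : ∀ s ∈ Icc c d, ∀ t ∈ Icc c d, dist s t ≤ δ → dist (f s) (f t) ≤ ω) :
    edist (u c) (u d)
      ≤ eVariationOn f (Icc c d) + ENNReal.ofReal (ω ^ 2 / (4 * lam) * (d - c)) := by
  set η := ω ^ 2 / (4 * lam)
  have hη : 0 ≤ η := by positivity
  refine rel_of_rel_of_sub_le (R := fun x y =>
    edist (u x) (u y) ≤ eVariationOn f (Icc x y) + ENNReal.ofReal (η * (y - x))) hδ hcd ?_ ?_
  · intro x y z _ hxy hyz _ hRxy hRyz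
    have hadd := eVariationOn.Icc_add_Icc f (s := univ) hxy hyz (mem_univ y)
    simp only [univ_inter] at hadd
    calc edist (u x) (u z)
        ≤ edist (u x) (u y) + edist (u y) (u z) := edist_triangle _ _ _
      _ ≤ _ := add_le_add hRxy hRyz
      _ = eVariationOn f (Icc x z) + ENNReal.ofReal (η * (z - x)) := by
          rw [add_add_add_comm, hadd, ← ENNReal.ofReal_add (mul_nonneg hη (sub_nonneg.2 hxy))
            (mul_nonneg hη (sub_nonneg.2 hyz)), ← mul_add, sub_add_sub_cancel']
  · intro x y hcx hxy hyd hyx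
    have hxy_sub : Icc x y ⊆ Icc c d := Icc_subset_Icc hcx hyd
    refine h.edist_le_eVariationOn_add hlam hf (hsub ⟨hcx, hxy.trans hyd⟩)
      (hsub ⟨hcx.trans hxy, hyd⟩) hxy fun s hs t ht => ?_
    rw [← dist_eq_norm]
    exact hω s (hxy_sub hs) t (hxy_sub ht) ((Real.dist_le_of_mem_Icc hs ht).trans hyx)

lemma edist_le_eVariationOn (h : IsCalibrated lam a b f u) (hlam : 0 < lam)
    (hf : ContinuousOn f (Ioo a b)) {c d : ℝ} (hcd : c ≤ d) (hsub : Icc c d ⊆ Ioo a b) :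
    edist (u c) (u d) ≤ eVariationOn f (Icc c d) := by
  have hcont : Continuous fun ω : ℝ =>
      eVariationOn f (Icc c d) + ENNReal.ofReal (ω ^ 2 / (4 * lam) * (d - c)) :=
    continuous_const.add (ENNReal.continuous_ofReal.comp (by fun_prop))
  have hlim : Tendsto (fun ω : ℝ =>
      eVariationOn f (Icc c d) + ENNReal.ofReal (ω ^ 2 / (4 * lam) * (d - c)))
      (𝓝[>] 0) (𝓝 (eVariationOn f (Icc c d))) := by
    simpa using hcont.continuousWithinAt (s := Ioi 0) (x := 0) |>.tendsto
  refine ge_of_tendsto hlim ?_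
  filter_upwards [self_mem_nhdsWithin] with ω hω
  obtain ⟨δ, hδ, hδω⟩ := Metric.uniformContinuousOn_iff_le.1
    (isCompact_Icc.uniformContinuousOn_of_continuous (hf.mono hsub)) ω hω
  exact h.edist_le_eVariationOn_add_of_dist_le hlam hf hcd hsub hδ hδω

theorem eVariationOn_le (h : IsCalibrated lam a b f u) (hlam : 0 < lam)
    (hf : ContinuousOn f (Ioo a b)) {c d : ℝ} (hsub : Icc c d ⊆ Ioo a b) :
    eVariationOn u (Icc c d) ≤ eVariationOn f (Icc c d) := by
  refine eVariationOn_le_of_edist_le fun x hx y hy hxy => ?_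
  rw [inter_eq_self_of_subset_right (Icc_subset_Icc hx.1 hy.2)]
  exact h.edist_le_eVariationOn hlam hf hxy ((Icc_subset_Icc hx.1 hy.2).trans hsub)

end ContinuousDatum

end IsCalibrated

section WeakDerivative

variable {n : ℕ} {a b : ℝ} {w w' : ℝ → EuclideanSpace ℝ (Fin n)}

lemma SqIntOn.integrableOn_norm {S : Set ℝ} (hw : SqIntOn w S) (hS : volume S ≠ ⊤) :
    IntegrableOn (fun x => ‖w x‖) S := by
  have hmeas : AEStronglyMeasurable (fun x => ‖w x‖) (volume.restrict S) := by
    simpa only [Real.sqrt_sq (norm_nonneg _)] using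
      Real.continuous_sqrt.comp_aestronglyMeasurable hw.1
  refine Integrable.mono' (hw.add (integrableOn_const hS (C := (1 : ℝ)))) hmeas
    (ae_of_all _ fun x => ?_)
  rw [norm_norm, Pi.add_apply]
  nlinarith [sq_nonneg (‖w x‖ - 1)]

lemma InH1.eVariationOn_le (hw : InH1 a b w w') {c d : ℝ} (hcd : c ≤ d)
    (hsub : Icc c d ⊆ Icc a b) :
    eVariationOn w (Icc c d) ≤ ENNReal.ofReal (∫ s in c..d, ‖w' s‖) := by
  have hac : a ≤ c := (hsub (left_mem_Icc.2 hcd)).1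
  have hdb : d ≤ b := (hsub (right_mem_Icc.2 hcd)).2
  have hint : IntervalIntegrable (fun s => ‖w' s‖) volume a b :=
    (intervalIntegrable_iff_integrableOn_Ioo_of_le (hac.trans (hcd.trans hdb))).2
      (SqIntOn.integrableOn_norm hw.2.1 measure_Ioo_lt_top.ne)
  have hint_of_mem : ∀ x ∈ Icc c d, ∀ y ∈ Icc c d,
      IntervalIntegrable (fun s => ‖w' s‖) volume x y := fun x hx y hy =>
    hint.mono_set (uIcc_subset_uIcc (Icc_subset_uIcc (hsub hx)) (Icc_subset_uIcc (hsub hy)))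
  set G : ℝ → ℝ := fun x => ∫ s in c..x, ‖w' s‖
  have hG : ∀ x ∈ Icc c d, ∀ y ∈ Icc c d, G y - G x = ∫ s in x..y, ‖w' s‖ := fun x hx y hy =>
    intervalIntegral.integral_interval_sub_left (hint_of_mem c (left_mem_Icc.2 hcd) y hy)
      (hint_of_mem c (left_mem_Icc.2 hcd) x hx)
  have hG_mono : MonotoneOn G (Icc c d) := fun x hx y hy hxy => by
    rw [← sub_nonneg, hG x hx y hy]
    exact intervalIntegral.integral_nonneg hxy fun _ _ => norm_nonneg _
  calc eVariationOn w (Icc c d)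
      ≤ eVariationOn G (Icc c d) := by
        refine eVariationOn_le_of_edist_le fun x hx y hy hxy => ?_
        refine le_trans ?_ (eVariationOn.edist_le G
          ⟨hx, left_mem_Icc.2 hxy⟩ ⟨hy, right_mem_Icc.2 hxy⟩)
        rw [edist_comm, edist_comm (G x), edist_dist, edist_dist, dist_eq_norm, Real.dist_eq,
          hG x hx y hy, hw.2.2 x (hsub hx) y (hsub hy)]
        exact ENNReal.ofReal_le_ofReal
          ((intervalIntegral.norm_integral_le_integral_norm hxy).trans (le_abs_self _))
    _ ≤ ENNReal.ofReal (G d - G c) := by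
        rw [← inter_self (Icc c d)]
        exact (hG_mono.eVariationOn_eq (left_mem_Icc.2 hcd) (right_mem_Icc.2 hcd)).le
    _ = ENNReal.ofReal (∫ s in c..d, ‖w' s‖) := by
        rw [hG c (left_mem_Icc.2 hcd) d (right_mem_Icc.2 hcd)]

end WeakDerivative

theorem tv_minimizer_le_integral_datum_derivative_on_balls_general
    {n : ℕ} {a b lam : ℝ} (hlam : 0 < lam) {f u : ℝ → EuclideanSpace ℝ (Fin n)}
    (hf : ContinuousOn f (Ioo a b)) (hf_sq : SqIntOn f (Ioo a b)) (hu : IsMinimizer lam a b f u)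
    {c d : ℝ} (hsub : Icc c d ⊆ Ioo a b) :
    eVariationOn u (Icc c d) ≤ eVariationOn f (Icc c d) := by
  rcases (Icc c d).eq_empty_or_nonempty with hempty | ⟨x, hx⟩
  · simp [hempty]
  have hab : a ≤ b := ((hsub hx).1.trans (hsub hx).2).le
  have hf₂ := hf_sq.memLp_two (hf.aestronglyMeasurable measurableSet_Ioo)
  exact (hu.isCalibrated hlam hab hf₂).eVariationOn_le hlam hf hsub

/-- for `f ∈ H¹(I,ℝⁿ)` with derivative `f'`, the ROF minimizer `u` has a
representative whose total variation over every closed ball `[x₀−r, x₀+r] ⊆ I` is at most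
`∫_{x₀−r}^{x₀+r} ‖f'‖`. -/
theorem tv_minimizer_le_integral_datum_derivative_on_balls
    {n : ℕ} (hn : 1 ≤ n) (a b : ℝ) (hab : a < b) (lam : ℝ) (hlam : 0 < lam)
    (f f' : ℝ → EuclideanSpace ℝ (Fin n)) (hf_meas : Measurable f)
    (hf_sq : SqIntOn f (Set.Ioo a b)) (hf : InH1 a b f f')
    (u : ℝ → EuclideanSpace ℝ (Fin n)) (hu : IsMinimizer lam a b f u) :
    ∃ ubar : ℝ → EuclideanSpace ℝ (Fin n),
      (∀ᵐ x ∂(MeasureTheory.volume.restrict (Set.Ioo a b)), ubar x = u x) ∧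
      ∀ x₀ ∈ Set.Ioo a b, ∀ r : ℝ, 0 < r → Set.Icc (x₀ - r) (x₀ + r) ⊆ Set.Ioo a b →
        eVariationOn ubar (Set.Icc (x₀ - r) (x₀ + r))
          ≤ ENNReal.ofReal (∫ x in (x₀ - r)..(x₀ + r), ‖f' x‖) := by
  have hfc : ContinuousOn f (Ioo a b) := hf.1.mono Ioo_subset_Icc_self
  refine ⟨u, ae_of_all _ fun _ => rfl, fun x₀ _ r hr hsub => ?_⟩
  exact (tv_minimizer_le_integral_datum_derivative_on_balls_general hlam hfc hf_sq hu hsub).trans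
    (hf.eVariationOn_le (by linarith) (hsub.trans Ioo_subset_Icc_self))
end
end
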